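/- arXiv:1806.04664 — 3 statements merged into one kernel-verified Lean document; each statement's English description precedes it below -/
import Mathlib

section
/- Let N ≥ 1 be an integer and let u, v : closure(D⁺) → ℝ^N be C¹ maps that agree on the arc ∂^A (i.e. u(x) = v(x) for all x with |x| = 1, x₂ ≥ 0). Then ∫_{D⁺} |v(x) − u(x)|² / (1 − |x|)² dx ≤ 4 ∫_{D⁺} |∇(v − u)(x)|² dx. (Hardy's inequality on the half disk, Lemma 2.3 of the paper.) -/
open MeasureTheory

/-- The open upper half unit disk `D⁺ = {x ∈ ℝ² : |x| < 1, x₂ > 0}`. -/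
def halfDisk : Set (EuclideanSpace ℝ (Fin 2)) := {x | ‖x‖ < 1 ∧ 0 < x 1}

/-- `|∇w|²(x) = Σ_{i=1,2} Σ_{j=1,…,N} (∂w^j/∂x_i)²`, i.e. the sum of the squared norms of the
partial derivatives of `w` at `x`. -/
noncomputable def gradSq {N : ℕ} (w : EuclideanSpace ℝ (Fin 2) → EuclideanSpace ℝ (Fin N))
    (x : EuclideanSpace ℝ (Fin 2)) : ℝ :=
  ∑ i : Fin 2, ‖fderiv ℝ w x (EuclideanSpace.single i (1 : ℝ))‖ ^ 2

/-!
Fix a unit vector `ω` in a cone of dimension `d`, and let `f r = w (r • ω)`, `ρ r = r ^ (d - 1)`, so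
that `f R = 0`. For `c > R` the function `G r = ρ r * ‖f r‖ ^ 2 / (c - r)` vanishes at `R` and is
nonnegative, and `0 ≤ ‖f / (c - r) + 2 • f'‖ ^ 2` together with `0 ≤ ρ'` gives
`G' ≥ ρ * ‖f‖ ^ 2 / (2 * (c - r) ^ 2) - 2 * ρ * ‖f'‖ ^ 2`. Integrating over `(s, R)` bounds the
first term by the second with no boundary term at the singularity `r = R`; letting `c → R` (Fatou)
and `s → 0` gives Hardy's inequality along the ray, with exactly the weight that polar coordinates
require.
-/

section HardyCone

open Set Filter Topology Metric Module
open scoped ENNReal RealInnerProductSpace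

section Interval

variable {F : Type*} [NormedAddCommGroup F] {f : ℝ → F} {ρ : ℝ → ℝ} {a b c : ℝ}

lemma continuousOn_mul_norm_sq_div_sub_sq {s : Set ℝ} (hf : ContinuousOn f s)
    (hρ : ContinuousOn ρ s) (hs : c ∉ s) :
    ContinuousOn (fun r ↦ ρ r * (‖f r‖ ^ 2 / (c - r) ^ 2)) s :=
  hρ.mul ((hf.norm.pow 2).div (by fun_prop) fun _ hr ↦
    pow_ne_zero 2 (sub_ne_zero.2 (ne_of_mem_of_not_mem hr hs).symm))

variable [InnerProductSpace ℝ F]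

lemma half_sq_div_sub_two_mul_sq_le (x y : F) (t : ℝ) :
    1 / 2 * (‖x‖ ^ 2 / t ^ 2) - 2 * ‖y‖ ^ 2 ≤ 2 * ⟪x, y⟫ / t + ‖x‖ ^ 2 / t ^ 2 := by
  have hsq : 0 ≤ 1 / 2 * ‖t⁻¹ • x + (2 : ℝ) • y‖ ^ 2 := by positivity
  rw [norm_add_sq_real, norm_smul, norm_smul, real_inner_smul_left, real_inner_smul_right,
    mul_pow, mul_pow, norm_inv, Real.norm_eq_abs, inv_pow, sq_abs, Real.norm_two] at hsq
  simp only [div_eq_mul_inv]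
  linarith

lemma weighted_half_sq_div_sub_two_mul_sq_le {x y : F} {p q t : ℝ} (hp : 0 ≤ p) (hq : 0 ≤ q)
    (ht : 0 ≤ t) :
    1 / 2 * (p * (‖x‖ ^ 2 / t ^ 2)) - 2 * (p * ‖y‖ ^ 2) ≤
      q * (‖x‖ ^ 2 / t) + p * (2 * ⟪x, y⟫ / t + ‖x‖ ^ 2 / t ^ 2) := by
  have hdrop : 0 ≤ q * (‖x‖ ^ 2 / t) := by positivity
  have hsq := mul_le_mul_of_nonneg_left (half_sq_div_sub_two_mul_sq_le x y t) hp
  linarith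

lemma hasDerivAt_mul_norm_sq_div_sub {f' : F} {ρ' r : ℝ} (hf : HasDerivAt f f' r)
    (hρ : HasDerivAt ρ ρ' r) (hr : r ≠ c) :
    HasDerivAt (fun s ↦ ρ s * ‖f s‖ ^ 2 / (c - s))
      (ρ' * (‖f r‖ ^ 2 / (c - r)) +
        ρ r * (2 * ⟪f r, f'⟫ / (c - r) + ‖f r‖ ^ 2 / (c - r) ^ 2)) r := by
  have hcr : c - r ≠ 0 := sub_ne_zero.2 hr.symm
  refine ((hρ.mul hf.norm_sq).div ((hasDerivAt_id r).const_sub c) hcr).congr_deriv ?_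
  simp only [Pi.mul_apply, id_eq]
  field_simp
  ring

lemma setIntegral_hardy_of_lt (hab : a ≤ b) (hbc : b < c)
    (hf : ContinuousOn f (Icc a b)) (hfd : DifferentiableOn ℝ f (Ioo a b)) (hfb : f b = 0)
    (hρ : DifferentiableOn ℝ ρ (Icc a b)) (hρm : MonotoneOn ρ (Icc a b))
    (hρ0 : ∀ r ∈ Icc a b, 0 ≤ ρ r)
    (hint : IntegrableOn (fun r ↦ ρ r * ‖deriv f r‖ ^ 2) (Ioo a b)) :
    ∫ r in Ioo a b, ρ r * (‖f r‖ ^ 2 / (c - r) ^ 2) ≤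
      4 * ∫ r in Ioo a b, ρ r * ‖deriv f r‖ ^ 2 := by
  have hpos : ∀ r ∈ Icc a b, 0 < c - r := fun r hr ↦ by linarith [hr.2]
  have hlhs : IntegrableOn (fun r ↦ ρ r * (‖f r‖ ^ 2 / (c - r) ^ 2)) (Ioo a b) :=
    (continuousOn_mul_norm_sq_div_sub_sq hf hρ.continuousOn
      fun hc ↦ hc.2.not_gt hbc).integrableOn_Icc.mono_set Ioo_subset_Icc_self
  have hcont : ContinuousOn (fun r ↦ ρ r * ‖f r‖ ^ 2 / (c - r)) (Icc a b) :=
    (hρ.continuousOn.mul (hf.norm.pow 2)).div (by fun_prop) fun r hr ↦ (hpos r hr).ne'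
  have hderiv : ∀ r ∈ Ioo a b, HasDerivAt (fun r ↦ ρ r * ‖f r‖ ^ 2 / (c - r)) _ r := fun r hr ↦
    hasDerivAt_mul_norm_sq_div_sub
      (hfd.differentiableAt (isOpen_Ioo.mem_nhds hr)).hasDerivAt
      (hρ.differentiableAt (Icc_mem_nhds hr.1 hr.2)).hasDerivAt (hr.2.trans hbc).ne
  have hρ' : ∀ r ∈ Ioo a b, 0 ≤ deriv ρ r := fun r hr ↦ by
    rw [← derivWithin_of_mem_nhds (Icc_mem_nhds hr.1 hr.2)]
    exact hρm.derivWithin_nonneg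
  have hFTC := intervalIntegral.integral_le_sub_of_hasDeriv_right_of_le hab hcont
    (fun r hr ↦ (hderiv r hr).hasDerivWithinAt)
    (integrableOn_Icc_iff_integrableOn_Ioo (by simp) (by simp) |>.2
      ((hlhs.const_mul (1 / 2)).sub (hint.const_mul 2)))
    fun r hr ↦ weighted_half_sq_div_sub_two_mul_sq_le (hρ0 r (Ioo_subset_Icc_self hr)) (hρ' r hr)
      (hpos r (Ioo_subset_Icc_self hr)).le
  have hleft : 0 ≤ ρ a * ‖f a‖ ^ 2 / (c - a) :=
    div_nonneg (mul_nonneg (hρ0 a (left_mem_Icc.2 hab)) (sq_nonneg _))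
      (hpos a (left_mem_Icc.2 hab)).le
  rw [intervalIntegral.integral_of_le hab, integral_Ioc_eq_integral_Ioo,
    integral_sub' (hlhs.const_mul _) (hint.const_mul _), integral_const_mul, integral_const_mul,
    hfb, norm_zero, zero_pow two_ne_zero, mul_zero, zero_div] at hFTC
  linarith

variable [CompleteSpace F]

lemma setLIntegral_hardy_of_lt (hab : a ≤ b) (hbc : b < c)
    (hf : ContinuousOn f (Icc a b)) (hfd : DifferentiableOn ℝ f (Ioo a b)) (hfb : f b = 0)
    (hρ : DifferentiableOn ℝ ρ (Icc a b)) (hρm : MonotoneOn ρ (Icc a b))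
    (hρ0 : ∀ r ∈ Icc a b, 0 ≤ ρ r) :
    ∫⁻ r in Ioo a b, ENNReal.ofReal (ρ r * (‖f r‖ ^ 2 / (c - r) ^ 2)) ≤
      4 * ∫⁻ r in Ioo a b, ENNReal.ofReal (ρ r * ‖deriv f r‖ ^ 2) := by
  have hρ_ae : ∀ᵐ r ∂volume.restrict (Ioo a b), 0 ≤ ρ r :=
    ae_restrict_of_forall_mem measurableSet_Ioo fun r hr ↦ hρ0 r (Ioo_subset_Icc_self hr)
  have hrhs0 : 0 ≤ᵐ[volume.restrict (Ioo a b)] fun r ↦ ρ r * ‖deriv f r‖ ^ 2 :=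
    hρ_ae.mono fun r hr ↦ mul_nonneg hr (by positivity)
  by_cases hint : IntegrableOn (fun r ↦ ρ r * ‖deriv f r‖ ^ 2) (Ioo a b)
  · rw [← ofReal_integral_eq_lintegral_ofReal
        ((continuousOn_mul_norm_sq_div_sub_sq hf hρ.continuousOn
          fun hc ↦ hc.2.not_gt hbc).integrableOn_Icc.mono_set Ioo_subset_Icc_self)
        (hρ_ae.mono fun r hr ↦ mul_nonneg hr (by positivity)),
      ← ofReal_integral_eq_lintegral_ofReal hint hrhs0, ← ENNReal.ofReal_ofNat,
      ← ENNReal.ofReal_mul (by norm_num)]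
    exact ENNReal.ofReal_le_ofReal
      (setIntegral_hardy_of_lt hab hbc hf hfd hfb hρ hρm hρ0 hint)
  · have hmeas : AEStronglyMeasurable (fun r ↦ ρ r * ‖deriv f r‖ ^ 2)
        (volume.restrict (Ioo a b)) :=
      ((hρ.continuousOn.mono Ioo_subset_Icc_self).aestronglyMeasurable measurableSet_Ioo).mul
        ((stronglyMeasurable_deriv f).norm.pow 2).aestronglyMeasurable
    have htop : ∫⁻ r in Ioo a b, ENNReal.ofReal (ρ r * ‖deriv f r‖ ^ 2) = ∞ := by
      by_contra hfin
      exact hint (lintegral_ofReal_ne_top_iff_integrable hmeas hrhs0 |>.1 hfin)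
    simp [htop]

lemma setLIntegral_hardy_of_continuousOn_Icc (hab : a ≤ b) (hf : ContinuousOn f (Icc a b))
    (hfd : DifferentiableOn ℝ f (Ioo a b)) (hfb : f b = 0)
    (hρ : DifferentiableOn ℝ ρ (Icc a b)) (hρm : MonotoneOn ρ (Icc a b))
    (hρ0 : ∀ r ∈ Icc a b, 0 ≤ ρ r) :
    ∫⁻ r in Ioo a b, ENNReal.ofReal (ρ r * (‖f r‖ ^ 2 / (b - r) ^ 2)) ≤
      4 * ∫⁻ r in Ioo a b, ENNReal.ofReal (ρ r * ‖deriv f r‖ ^ 2) := by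
  let φ : ℝ → ℝ → ℝ≥0∞ := fun c r ↦ ENNReal.ofReal (ρ r * (‖f r‖ ^ 2 / (c - r) ^ 2))
  have hφ_meas : ∀ c, AEMeasurable (φ c) (volume.restrict (Ioo a b)) := fun c ↦
    (((hρ.continuousOn.mono Ioo_subset_Icc_self).aemeasurable measurableSet_Ioo).mul
      ((((hf.mono Ioo_subset_Icc_self).norm.aemeasurable measurableSet_Ioo).pow_const 2).div
        (by fun_prop))).ennreal_ofReal
  have hφ_le : ∀ᶠ c in 𝓝[>] b, ∫⁻ r in Ioo a b, φ c r ≤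
      4 * ∫⁻ r in Ioo a b, ENNReal.ofReal (ρ r * ‖deriv f r‖ ^ 2) := by
    filter_upwards [self_mem_nhdsWithin] with c hc
    exact setLIntegral_hardy_of_lt hab hc hf hfd hfb hρ hρm hρ0
  have hφ_lim : ∀ r ∈ Ioo a b, Tendsto (φ · r) (𝓝[>] b) (𝓝 (φ b r)) := by
    intro r hr
    have hne : (b - r) ^ 2 ≠ 0 := pow_ne_zero 2 (sub_pos.2 hr.2).ne'
    have hcont : ContinuousAt (fun c ↦ ρ r * (‖f r‖ ^ 2 / (c - r) ^ 2)) b := by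
      fun_prop (disch := assumption)
    exact ENNReal.tendsto_ofReal (hcont.tendsto.mono_left nhdsWithin_le_nhds)
  calc ∫⁻ r in Ioo a b, φ b r
      = ∫⁻ r in Ioo a b, liminf (φ · r) (𝓝[>] b) :=
        setLIntegral_congr_fun measurableSet_Ioo fun r hr ↦ (hφ_lim r hr).liminf_eq.symm
    _ ≤ liminf (fun c ↦ ∫⁻ r in Ioo a b, φ c r) (𝓝[>] b) := lintegral_liminf_le' hφ_meas
    _ ≤ _ := liminf_le_of_frequently_le' hφ_le.frequently

theorem setLIntegral_hardy_Ioo (hf : ContinuousOn f (Ioc a b))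
    (hfd : DifferentiableOn ℝ f (Ioo a b)) (hfb : f b = 0)
    (hρ : DifferentiableOn ℝ ρ (Ioc a b)) (hρm : MonotoneOn ρ (Ioc a b))
    (hρ0 : ∀ r ∈ Ioc a b, 0 ≤ ρ r) :
    ∫⁻ r in Ioo a b, ENNReal.ofReal (ρ r * (‖f r‖ ^ 2 / (b - r) ^ 2)) ≤
      4 * ∫⁻ r in Ioo a b, ENNReal.ofReal (ρ r * ‖deriv f r‖ ^ 2) := by
  rcases le_or_gt b a with hba | hab
  · simp [Ioo_eq_empty hba.not_gt]
  have hmeas : AEMeasurable (fun r ↦ ENNReal.ofReal (ρ r * (‖f r‖ ^ 2 / (b - r) ^ 2)))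
      (volume.restrict (Ioo a b)) :=
    ((continuousOn_mul_norm_sq_div_sub_sq (hf.mono Ioo_subset_Ioc_self)
      (hρ.continuousOn.mono Ioo_subset_Ioc_self) right_notMem_Ioo).aemeasurable
        measurableSet_Ioo).ennreal_ofReal
  have hcover : AECover (volume.restrict (Ioo a b)) (𝓝[>] a) fun s ↦ Ioo s b :=
    aecover_Ioo_of_Ioo (tendsto_id.mono_left nhdsWithin_le_nhds) tendsto_const_nhds
  refine le_of_tendsto (hcover.lintegral_tendsto_of_countably_generated hmeas) ?_
  filter_upwards [Ioo_mem_nhdsGT hab] with s hs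
  have hIcc : Icc s b ⊆ Ioc a b := Icc_subset_Ioc_iff hs.2.le |>.2 ⟨hs.1, le_rfl⟩
  have hIoo : Ioo s b ⊆ Ioo a b := Ioo_subset_Ioo_left hs.1.le
  rw [Measure.restrict_restrict_of_subset hIoo]
  refine (setLIntegral_hardy_of_continuousOn_Icc hs.2.le (hf.mono hIcc) (hfd.mono hIoo) hfb
    (hρ.mono hIcc) (hρm.mono hIcc) fun r hr ↦ hρ0 r (hIcc hr)).trans ?_
  gcongr

end Interval

section Ray

variable {E F : Type*} [NormedAddCommGroup E] [NormedSpace ℝ E] [NormedAddCommGroup F]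
  [InnerProductSpace ℝ F] [CompleteSpace F] {w : E → F} {ω : E} {R : ℝ}

theorem setLIntegral_hardy_ray (hω : ‖ω‖ = 1) (n : ℕ)
    (hw : ContinuousOn (fun r : ℝ ↦ w (r • ω)) (Ioc 0 R))
    (hwd : ∀ r ∈ Ioo 0 R, DifferentiableAt ℝ w (r • ω)) (hw0 : w (R • ω) = 0) :
    ∫⁻ r in Ioo 0 R, ENNReal.ofReal (r ^ n) *
        ENNReal.ofReal (‖w (r • ω)‖ ^ 2 / (R - ‖r • ω‖) ^ 2) ≤
      4 * ∫⁻ r in Ioo 0 R, ENNReal.ofReal (r ^ n) *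
        ENNReal.ofReal (‖fderiv ℝ w (r • ω)‖ ^ 2) := by
  have hderiv : ∀ r ∈ Ioo 0 R, HasDerivAt (fun r : ℝ ↦ w (r • ω)) (fderiv ℝ w (r • ω) ω) r :=
    fun r hr ↦ (hwd r hr).hasFDerivAt.comp_hasDerivAt r
      (by simpa using (hasDerivAt_id r).smul_const ω)
  have hnorm : ∀ r ∈ Ioo 0 R, ‖deriv (fun r : ℝ ↦ w (r • ω)) r‖ ≤ ‖fderiv ℝ w (r • ω)‖ :=
    fun r hr ↦ by
      rw [(hderiv r hr).deriv]
      exact (fderiv ℝ w (r • ω)).unit_le_opNorm ω hω.le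
  calc ∫⁻ r in Ioo 0 R, ENNReal.ofReal (r ^ n) *
        ENNReal.ofReal (‖w (r • ω)‖ ^ 2 / (R - ‖r • ω‖) ^ 2)
      = ∫⁻ r in Ioo 0 R, ENNReal.ofReal (r ^ n * (‖w (r • ω)‖ ^ 2 / (R - r) ^ 2)) :=
        setLIntegral_congr_fun measurableSet_Ioo fun r hr ↦ by
          simp only [norm_smul, hω, mul_one, Real.norm_of_nonneg hr.1.le,
            ENNReal.ofReal_mul (pow_nonneg hr.1.le n)]
    _ ≤ 4 * ∫⁻ r in Ioo 0 R,
          ENNReal.ofReal (r ^ n * ‖deriv (fun r : ℝ ↦ w (r • ω)) r‖ ^ 2) :=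
        setLIntegral_hardy_Ioo hw (fun r hr ↦ (hderiv r hr).differentiableAt.differentiableWithinAt)
          hw0 (by fun_prop) (fun r hr s _ hrs ↦ pow_le_pow_left₀ hr.1.le hrs n)
          fun r hr ↦ pow_nonneg hr.1.le n
    _ ≤ _ := by
        refine mul_le_mul_right (setLIntegral_mono' measurableSet_Ioo fun r hr ↦ ?_) 4
        rw [← ENNReal.ofReal_mul (pow_nonneg hr.1.le n)]
        gcongr
        exacts [pow_nonneg hr.1.le n, hnorm r hr]

end Ray

section Cone

variable {E : Type*} [NormedAddCommGroup E] [NormedSpace ℝ E] [FiniteDimensional ℝ E]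
  [Nontrivial E] [MeasurableSpace E] [BorelSpace E] (μ : Measure E) [μ.IsAddHaarMeasure]
  {K : Set E} {R : ℝ} {H : E → ℝ≥0∞}

theorem lintegral_eq_lintegral_toSphere (hH : AEMeasurable H μ) :
    ∫⁻ x, H x ∂μ = ∫⁻ ω, (∫⁻ r in Ioi (0 : ℝ),
      ENNReal.ofReal (r ^ (finrank ℝ E - 1)) * H (r • (ω : E))) ∂μ.toSphere := by
  let Φ := homeomorphUnitSphereProd E
  have hΦ : MeasurePreserving Φ.symm _ _ :=
    μ.measurePreserving_homeomorphUnitSphereProd.symm Φ.toMeasurableEquiv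
  have hsub : MeasurePreserving ((↑) : ({0}ᶜ : Set E) → E) (μ.comap (↑)) (μ.restrict {0}ᶜ) :=
    measurePreserving_subtype_coe (measurableSet_singleton 0).compl
  have hH' : AEMeasurable H (μ.restrict {0}ᶜ) := hH.restrict
  have hmeas : AEMeasurable (fun p ↦ H (Φ.symm p))
      (μ.toSphere.prod (.volumeIoiPow (finrank ℝ E - 1))) :=
    hH'.comp_quasiMeasurePreserving (hsub.comp hΦ).quasiMeasurePreserving
  calc ∫⁻ x, H x ∂μ = ∫⁻ x : ({0}ᶜ : Set E), H x ∂μ.comap (↑) := by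
        rw [lintegral_subtype_comap (measurableSet_singleton 0).compl, restrict_compl_singleton]
    _ = ∫⁻ p, H (Φ.symm p) ∂μ.toSphere.prod (.volumeIoiPow (finrank ℝ E - 1)) :=
        (hΦ.lintegral_comp_emb Φ.symm.measurableEmbedding _).symm
    _ = ∫⁻ ω, ∫⁻ r : Ioi (0 : ℝ), H (r.1 • (ω : E)) ∂.volumeIoiPow (finrank ℝ E - 1)
          ∂μ.toSphere := lintegral_prod _ hmeas
    _ = _ := by
        congr! 2 with ω
        rw [Measure.volumeIoiPow, lintegral_withDensity_eq_lintegral_mul_non_measurable _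
            (by fun_prop) (by simp),
          ← lintegral_subtype_comap measurableSet_Ioi]
        rfl

theorem setLIntegral_inter_ball_eq_lintegral_toSphere (hK : MeasurableSet K)
    (hcone : ∀ ⦃t : ℝ⦄, 0 < t → ∀ ⦃x⦄, x ∈ K → t • x ∈ K)
    (hH : AEMeasurable H (μ.restrict (K ∩ ball 0 R))) :
    ∫⁻ x in K ∩ ball 0 R, H x ∂μ =
      ∫⁻ ω in ((↑) : sphere (0 : E) 1 → E) ⁻¹' K, (∫⁻ r in Ioo 0 R,
        ENNReal.ofReal (r ^ (finrank ℝ E - 1)) * H (r • (ω : E))) ∂μ.toSphere := by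
  have hD : MeasurableSet (K ∩ ball 0 R) := hK.inter measurableSet_ball
  have hmem_iff : ∀ (ω : sphere (0 : E) 1), ∀ r ∈ Ioi (0 : ℝ),
      r • (ω : E) ∈ K ∩ ball 0 R ↔ (ω : E) ∈ K ∧ r < R := by
    intro ω r (hr : 0 < r)
    refine and_congr ⟨fun h ↦ ?_, fun h ↦ hcone hr h⟩ ?_
    · simpa [smul_smul, hr.ne'] using hcone (inv_pos.2 hr) h
    · simp [norm_smul, abs_of_pos hr]
  rw [← lintegral_indicator hD, lintegral_eq_lintegral_toSphere μ
      ((aemeasurable_indicator_iff hD).2 hH),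
    ← lintegral_indicator (hK.preimage measurable_subtype_coe)]
  congr! 2 with ω
  by_cases hω : (ω : E) ∈ K
  · rw [indicator_of_mem (mem_preimage.2 hω), ← Ioi_inter_Iio, inter_comm (Ioi 0),
      ← setLIntegral_indicator (f := fun r ↦ _ * _) measurableSet_Iio]
    refine setLIntegral_congr_fun measurableSet_Ioi fun r hr ↦ ?_
    by_cases hrR : r < R <;> simp [indicator, hmem_iff ω r hr, hω, hrR]
  · rw [indicator_of_notMem (by simpa using hω)]
    refine setLIntegral_eq_zero measurableSet_Ioi fun r hr ↦ ?_
    simp [indicator, hmem_iff ω r hr, hω]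

theorem setLIntegral_hardy_cone_inter_ball {F : Type*} [NormedAddCommGroup F]
    [InnerProductSpace ℝ F] [CompleteSpace F] {w : E → F} (hK : IsOpen K)
    (hcone : ∀ ⦃t : ℝ⦄, 0 < t → ∀ ⦃x⦄, x ∈ K → t • x ∈ K)
    (hw : ContinuousOn w (K ∩ closedBall 0 R)) (hwd : DifferentiableOn ℝ w (K ∩ ball 0 R))
    (hw0 : ∀ x ∈ K, ‖x‖ = R → w x = 0) :
    ∫⁻ x in K ∩ ball 0 R, ENNReal.ofReal (‖w x‖ ^ 2 / (R - ‖x‖) ^ 2) ∂μ ≤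
      4 * ∫⁻ x in K ∩ ball 0 R, ENNReal.ofReal (‖fderiv ℝ w x‖ ^ 2) ∂μ := by
  have hD : IsOpen (K ∩ ball 0 R) := hK.inter isOpen_ball
  have hlhs : AEMeasurable (fun x ↦ ENNReal.ofReal (‖w x‖ ^ 2 / (R - ‖x‖) ^ 2))
      (μ.restrict (K ∩ ball 0 R)) :=
    (((hwd.continuousOn.norm.aemeasurable hD.measurableSet).pow_const 2).div
      (by fun_prop)).ennreal_ofReal
  have hrhs : Measurable fun x ↦ ENNReal.ofReal (‖fderiv ℝ w x‖ ^ 2) :=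
    ((measurable_fderiv ℝ w).norm.pow_const 2).ennreal_ofReal
  rw [setLIntegral_inter_ball_eq_lintegral_toSphere μ hK.measurableSet hcone hlhs,
    setLIntegral_inter_ball_eq_lintegral_toSphere μ hK.measurableSet hcone hrhs.aemeasurable,
    ← lintegral_const_mul' _ _ (by simp)]
  refine setLIntegral_mono' (hK.measurableSet.preimage measurable_subtype_coe) fun ω hω ↦ ?_
  have hω1 : ‖(ω : E)‖ = 1 := norm_eq_of_mem_sphere ω
  rcases le_or_gt R 0 with hR | hR
  · simp [Ioo_eq_empty hR.not_gt]
  refine setLIntegral_hardy_ray hω1 _ (hw.comp (by fun_prop) fun r hr ↦ ?_) (fun r hr ↦ ?_)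
    (hw0 _ (hcone hR hω) (by simp [norm_smul, hω1, hR.le]))
  · exact ⟨hcone hr.1 hω, by simpa [norm_smul, hω1, abs_of_pos hr.1] using hr.2⟩
  · refine hwd.differentiableAt (hD.mem_nhds ⟨hcone hr.1 hω, ?_⟩)
    simpa [norm_smul, hω1, abs_of_pos hr.1] using hr.2

end Cone

section Gradient

variable {E F ι : Type*} [NormedAddCommGroup F] [Fintype ι]

lemma sq_opNorm_le_sum_sq_norm [NormedAddCommGroup E] [InnerProductSpace ℝ E] [NormedSpace ℝ F]
    (b : OrthonormalBasis ι ℝ E) (A : E →L[ℝ] F) : ‖A‖ ^ 2 ≤ ∑ i, ‖A (b i)‖ ^ 2 := by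
  rw [← Real.le_sqrt (norm_nonneg A) (by positivity)]
  refine A.opNorm_le_bound (Real.sqrt_nonneg _) fun x ↦ ?_
  calc ‖A x‖ = ‖∑ i, ⟪b i, x⟫ • A (b i)‖ := by
        conv_lhs => rw [← b.sum_repr' x]
        simp only [map_sum, map_smul]
    _ ≤ ∑ i, ‖A (b i)‖ * ‖⟪b i, x⟫‖ :=
        (norm_sum_le _ _).trans_eq (by simp only [norm_smul, mul_comm])
    _ ≤ √(∑ i, ‖A (b i)‖ ^ 2) * √(∑ i, ‖⟪b i, x⟫‖ ^ 2) := Real.sum_mul_le_sqrt_mul_sqrt _ _ _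
    _ = √(∑ i, ‖A (b i)‖ ^ 2) * ‖x‖ := by
        rw [b.sum_sq_norm_inner_right, Real.sqrt_sq (norm_nonneg x)]

lemma integrableOn_sum_sq_norm_fderiv_of_contDiffOn_closure [NormedAddCommGroup E]
    [NormedSpace ℝ E] [FiniteDimensional ℝ E] [MeasurableSpace E] [BorelSpace E] [NormedSpace ℝ F]
    {μ : Measure E} [IsFiniteMeasureOnCompacts μ] {s : Set E} {w : E → F} (hs : IsOpen s)
    (hconv : Convex ℝ s) (hbdd : Bornology.IsBounded s) (hw : ContDiffOn ℝ 1 w (closure s))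
    (e : ι → E) : IntegrableOn (fun x ↦ ∑ i, ‖fderiv ℝ w x (e i)‖ ^ 2) s μ := by
  rcases s.eq_empty_or_nonempty with rfl | hne
  · exact integrableOn_empty
  have huniq : UniqueDiffOn ℝ (closure s) :=
    uniqueDiffOn_convex hconv.closure (hne.mono (hs.subset_interior_iff.2 subset_closure))
  have hcont : ContinuousOn (fun x ↦ ∑ i, ‖fderivWithin ℝ w (closure s) x (e i)‖ ^ 2)
      (closure s) :=
    continuousOn_finsetSum _ fun i _ ↦
      ((hw.continuousOn_fderivWithin huniq le_rfl).clm_apply continuousOn_const).norm.pow 2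
  have := FiniteDimensional.proper_real E
  refine ((hcont.integrableOn_compact hbdd.isCompact_closure).mono_set subset_closure).congr_fun
    (fun x hx ↦ ?_) hs.measurableSet
  simp only [fderivWithin_of_mem_nhds (mem_of_superset (hs.mem_nhds hx) subset_closure)]

end Gradient

theorem stmt_0_general {E F ι : Type*} [NormedAddCommGroup E] [InnerProductSpace ℝ E]
    [FiniteDimensional ℝ E] [Nontrivial E] [MeasurableSpace E] [BorelSpace E]
    [NormedAddCommGroup F] [InnerProductSpace ℝ F] [CompleteSpace F] [Fintype ι]
    (μ : Measure E) [μ.IsAddHaarMeasure] (b : OrthonormalBasis ι ℝ E)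
    {K : Set E} {R : ℝ} {w : E → F} (hK : IsOpen K)
    (hcone : ∀ ⦃t : ℝ⦄, 0 < t → ∀ ⦃x⦄, x ∈ K → t • x ∈ K)
    (hw : ContinuousOn w (K ∩ closedBall 0 R)) (hwd : DifferentiableOn ℝ w (K ∩ ball 0 R))
    (hw0 : ∀ x ∈ K, ‖x‖ = R → w x = 0)
    (hint : IntegrableOn (fun x ↦ ∑ i, ‖fderiv ℝ w x (b i)‖ ^ 2) (K ∩ ball 0 R) μ) :
    IntegrableOn (fun x ↦ ‖w x‖ ^ 2 / (R - ‖x‖) ^ 2) (K ∩ ball 0 R) μ ∧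
      ∫ x in K ∩ ball 0 R, ‖w x‖ ^ 2 / (R - ‖x‖) ^ 2 ∂μ ≤
        4 * ∫ x in K ∩ ball 0 R, ∑ i, ‖fderiv ℝ w x (b i)‖ ^ 2 ∂μ := by
  have hmeas : AEStronglyMeasurable (fun x ↦ ‖w x‖ ^ 2 / (R - ‖x‖) ^ 2)
      (μ.restrict (K ∩ ball 0 R)) :=
    (((hwd.continuousOn.norm.aemeasurable
      (hK.inter isOpen_ball).measurableSet).pow_const 2).div (by fun_prop)).aestronglyMeasurable
  have hlint : ∫⁻ x in K ∩ ball 0 R, ENNReal.ofReal (‖w x‖ ^ 2 / (R - ‖x‖) ^ 2) ∂μ ≤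
      ENNReal.ofReal (4 * ∫ x in K ∩ ball 0 R, ∑ i, ‖fderiv ℝ w x (b i)‖ ^ 2 ∂μ) := by
    refine (setLIntegral_hardy_cone_inter_ball μ hK hcone hw hwd hw0).trans ?_
    rw [ENNReal.ofReal_mul (by norm_num), ENNReal.ofReal_ofNat,
      ofReal_integral_eq_lintegral_ofReal hint (ae_of_all _ fun x ↦ by positivity)]
    gcongr with x
    exact sq_opNorm_le_sum_sq_norm b _
  refine ⟨lintegral_ofReal_ne_top_iff_integrable hmeas (ae_of_all _ fun x ↦ by positivity) |>.1
    (hlint.trans_lt ENNReal.ofReal_lt_top).ne, ?_⟩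
  rw [integral_eq_lintegral_of_nonneg_ae (ae_of_all _ fun x ↦ by positivity) hmeas]
  exact ENNReal.toReal_le_of_le_ofReal (by positivity) hlint

section HalfDisk

lemma halfDisk_eq_inter : halfDisk = {x | 0 < x 1} ∩ ball 0 1 := by
  ext x
  simp [halfDisk, and_comm]

lemma gradSq_eq_sum_basisFun {N : ℕ}
    (w : EuclideanSpace ℝ (Fin 2) → EuclideanSpace ℝ (Fin N)) :
    gradSq w = fun x ↦ ∑ i, ‖fderiv ℝ w x (EuclideanSpace.basisFun (Fin 2) ℝ i)‖ ^ 2 := by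
  simp only [funext_iff, gradSq, EuclideanSpace.basisFun_apply, implies_true]

lemma isOpen_upperHalfPlane : IsOpen {x : EuclideanSpace ℝ (Fin 2) | 0 < x 1} :=
  isOpen_lt continuous_const (by fun_prop)

lemma inter_closedBall_subset_closure_halfDisk :
    {x : EuclideanSpace ℝ (Fin 2) | 0 < x 1} ∩ closedBall 0 1 ⊆ closure halfDisk := by
  rw [halfDisk_eq_inter, ← closure_ball _ one_ne_zero]
  exact isOpen_upperHalfPlane.inter_closure

lemma integrableOn_gradSq {N : ℕ} {w : EuclideanSpace ℝ (Fin 2) → EuclideanSpace ℝ (Fin N)}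
    (hw : ContDiffOn ℝ 1 w (closure halfDisk)) : IntegrableOn (gradSq w) halfDisk := by
  have hconv : Convex ℝ halfDisk := by
    rw [halfDisk_eq_inter]
    exact (convex_halfSpace_gt (EuclideanSpace.proj (𝕜 := ℝ) (1 : Fin 2)).isLinear 0).inter
      (convex_ball 0 1)
  have hopen : IsOpen halfDisk := by
    rw [halfDisk_eq_inter]
    exact isOpen_upperHalfPlane.inter isOpen_ball
  have hbdd : Bornology.IsBounded halfDisk := by
    rw [halfDisk_eq_inter]
    exact isBounded_ball.subset inter_subset_right
  exact integrableOn_sum_sq_norm_fderiv_of_contDiffOn_closure hopen hconv hbdd hw _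

end HalfDisk

end HardyCone

/-- Hardy's inequality on the half disk (Lemma 2.3): if `u, v` are `C¹` on the closed upper half
disk and agree on the arc `∂^A`, then
`∫_{D⁺} |v − u|²/(1 − |x|)² ≤ 4 ∫_{D⁺} |∇(v − u)|²`. -/
theorem stmt_0 (N : ℕ) (hN : 1 ≤ N)
    (u v : EuclideanSpace ℝ (Fin 2) → EuclideanSpace ℝ (Fin N))
    (hu : ContDiffOn ℝ 1 u (closure halfDisk))
    (hv : ContDiffOn ℝ 1 v (closure halfDisk))
    (hagree : ∀ x : EuclideanSpace ℝ (Fin 2), ‖x‖ = 1 → 0 ≤ x 1 → u x = v x) :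
    (∫ x in halfDisk, ‖v x - u x‖ ^ 2 / (1 - ‖x‖) ^ 2) ≤
      4 * ∫ x in halfDisk, gradSq (fun y => v y - u y) x := by
  have hw : ContDiffOn ℝ 1 (fun y ↦ v y - u y) (closure halfDisk) := hv.sub hu
  have hint := integrableOn_gradSq hw
  have hwc := hw.continuousOn.mono inter_closedBall_subset_closure_halfDisk
  have hwd := (hw.mono subset_closure).differentiableOn one_ne_zero
  rw [gradSq_eq_sum_basisFun, halfDisk_eq_inter] at hint ⊢
  rw [halfDisk_eq_inter] at hwd
  exact (stmt_0_general volume _ isOpen_upperHalfPlane (fun t ht x hx ↦ mul_pos ht hx) hwc hwd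
    (fun x hx hx1 ↦ sub_eq_zero.2 (hagree x hx1 (le_of_lt hx)).symm) hint).2
end

section
/- Let N ≥ 1 be an integer and let w : closure(D⁺) → ℝ^N be a C¹ map vanishing on the arc ∂^A (i.e. w(x) = 0 whenever |x| = 1, x₂ ≥ 0). Then the weighted boundary trace integral along the chord satisfies ∫_{−1}^{1} |w(x₁, 0)|² / (1 − |x₁|) dx₁ ≤ 4 ∫_{D⁺} |∇w|² dx. (Boundary Hardy-type trace estimate, established in the proof of the energy convexity Theorem 2.2.) -/
open MeasureTheory

/-! Fix a sign `ε` and consider the segment that starts at the chord point `(t, 0)`, where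
`0 ≤ ε t < 1`, and follows the diagonal direction `(ε, 1)` until it meets the arc. It rises to a
height less than `1 - |t|` and `w` vanishes at its end, so the fundamental theorem of calculus and
Cauchy–Schwarz bound `|w (t, 0)|² / (1 - |t|)` by the integral of `|∂_(ε, 1) w|² ≤ 2 |∇w|²` along
the segment. The map sending `(t, s)` to `(t + ε s, s)` preserves area, so integrating over `t`
yields an integral over the part of the half disk swept by the segments. The parts belonging to
`ε = 1` and `ε = -1` are disjoint, which gives the estimate with constant `2`. -/

open Set
open scoped ENNReal

section Integration

variable {α β : Type*} [MeasurableSpace α] [MeasurableSpace β] {μ : Measure α} {ν : Measure β}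

lemma sq_lintegral_le_measure_univ_mul_lintegral_sq {f : α → ℝ≥0∞} (hf : AEMeasurable f μ) :
    (∫⁻ x, f x ∂μ) ^ 2 ≤ μ univ * ∫⁻ x, f x ^ 2 ∂μ := by
  have holder := ENNReal.lintegral_mul_le_Lp_mul_Lq μ Real.HolderConjugate.two_two
    (aemeasurable_const (b := (1 : ℝ≥0∞))) hf
  have hroot (a : ℝ≥0∞) : (a ^ (1 / 2 : ℝ)) ^ 2 = a := by
    rw [← ENNReal.rpow_mul_natCast]
    norm_num
  calc (∫⁻ x, f x ∂μ) ^ 2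
      ≤ ((μ univ) ^ (1 / 2 : ℝ) * (∫⁻ x, f x ^ 2 ∂μ) ^ (1 / 2 : ℝ)) ^ 2 := by
        gcongr
        simpa using holder
    _ = μ univ * ∫⁻ x, f x ^ 2 ∂μ := by rw [mul_pow, hroot, hroot]

lemma integrable_and_integral_le_of_lintegral_ofReal_le {f : α → ℝ} {g : β → ℝ}
    (hfm : AEStronglyMeasurable f μ) (hf : 0 ≤ᵐ[μ] f) (hgi : Integrable g ν) (hg : 0 ≤ᵐ[ν] g)
    (hfg : ∫⁻ x, ENNReal.ofReal (f x) ∂μ ≤ ∫⁻ y, ENNReal.ofReal (g y) ∂ν) :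
    Integrable f μ ∧ ∫ x, f x ∂μ ≤ ∫ y, g y ∂ν := by
  have hg_top : ∫⁻ y, ENNReal.ofReal (g y) ∂ν ≠ ∞ :=
    (lintegral_ofReal_ne_top_iff_integrable hgi.aestronglyMeasurable hg).2 hgi
  refine ⟨(lintegral_ofReal_ne_top_iff_integrable hfm hf).1 (ne_top_of_le_ne_top hg_top hfg), ?_⟩
  rw [integral_eq_lintegral_of_nonneg_ae hf hfm,
    integral_eq_lintegral_of_nonneg_ae hg hgi.aestronglyMeasurable]
  exact ENNReal.toReal_mono hg_top hfg

end Integration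

section FundamentalTheorem

variable {F : Type*} [NormedAddCommGroup F] [NormedSpace ℝ F] [CompleteSpace F]
  {f : ℝ → F} {a b : ℝ}

lemma enorm_sub_le_lintegral_enorm_deriv (hab : a ≤ b) (hf : ContinuousOn f (Icc a b))
    (hf' : DifferentiableOn ℝ f (Ioo a b)) :
    ‖f b - f a‖ₑ ≤ ∫⁻ s in Ioo a b, ‖deriv f s‖ₑ := by
  by_cases hint : ∫⁻ s in Ioo a b, ‖deriv f s‖ₑ = ∞
  · simp [hint]
  have hderiv : IntegrableOn (deriv f) (Ioo a b) :=
    ⟨aestronglyMeasurable_deriv f _, lt_top_iff_ne_top.2 hint⟩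
  rw [← intervalIntegral.integral_eq_sub_of_hasDerivAt_of_le hab hf
      (fun s hs => (hf'.differentiableAt (Ioo_mem_nhds hs.1 hs.2)).hasDerivAt)
      ((intervalIntegrable_iff_integrableOn_Ioo_of_le hab).2 hderiv),
    intervalIntegral.integral_of_le hab, integral_Ioc_eq_integral_Ioo]
  exact enorm_integral_le_lintegral_enorm _

lemma enorm_sub_sq_le_mul_lintegral_enorm_deriv_sq (hab : a ≤ b) (hf : ContinuousOn f (Icc a b))
    (hf' : DifferentiableOn ℝ f (Ioo a b)) :
    ‖f b - f a‖ₑ ^ 2 ≤ ENNReal.ofReal (b - a) * ∫⁻ s in Ioo a b, ‖deriv f s‖ₑ ^ 2 := by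
  calc ‖f b - f a‖ₑ ^ 2 ≤ (∫⁻ s in Ioo a b, ‖deriv f s‖ₑ) ^ 2 := by
        gcongr
        exact enorm_sub_le_lintegral_enorm_deriv hab hf hf'
    _ ≤ _ := by
        simpa using sq_lintegral_le_measure_univ_mul_lintegral_sq
          (aestronglyMeasurable_deriv f (volume.restrict (Ioo a b))).enorm

end FundamentalTheorem

section EnergyDensity

variable {ι F : Type*} [Fintype ι] [DecidableEq ι] [NormedAddCommGroup F] [NormedSpace ℝ F]

/-- The energy density `|∇w|²` of a map with values in an arbitrary normed space. For maps from
the plane to a Euclidean space it is definitionally `gradSq`. -/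
noncomputable def energyDensity (w : EuclideanSpace ℝ ι → F) (x : EuclideanSpace ℝ ι) : ℝ :=
  ∑ i, ‖fderiv ℝ w x (EuclideanSpace.single i 1)‖ ^ 2

lemma energyDensity_nonneg (w : EuclideanSpace ℝ ι → F) (x : EuclideanSpace ℝ ι) :
    0 ≤ energyDensity w x :=
  Finset.sum_nonneg fun _ _ => sq_nonneg _

lemma norm_apply_sq_le_norm_sq_mul_sum (L : EuclideanSpace ℝ ι →L[ℝ] F)
    (v : EuclideanSpace ℝ ι) :
    ‖L v‖ ^ 2 ≤ ‖v‖ ^ 2 * ∑ i, ‖L (EuclideanSpace.single i 1)‖ ^ 2 := by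
  have hv : v = ∑ i, v i • EuclideanSpace.single i (1 : ℝ) := by
    simpa using ((EuclideanSpace.basisFun ι ℝ).sum_repr v).symm
  have hLv : ‖L v‖ ≤ ∑ i, ‖v i‖ * ‖L (EuclideanSpace.single i 1)‖ := by
    conv_lhs => rw [hv, map_sum]
    exact (norm_sum_le _ _).trans_eq (by simp only [map_smul, norm_smul])
  calc ‖L v‖ ^ 2 ≤ (∑ i, ‖v i‖ * ‖L (EuclideanSpace.single i 1)‖) ^ 2 := by gcongr
    _ ≤ (∑ i, ‖v i‖ ^ 2) * ∑ i, ‖L (EuclideanSpace.single i 1)‖ ^ 2 :=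
        Finset.sum_mul_sq_le_sq_mul_sq _ _ _
    _ = _ := by rw [EuclideanSpace.norm_sq_eq]

lemma enorm_fderiv_apply_sq_le (w : EuclideanSpace ℝ ι → F) (x v : EuclideanSpace ℝ ι) :
    ‖fderiv ℝ w x v‖ₑ ^ 2 ≤ ENNReal.ofReal (‖v‖ ^ 2 * energyDensity w x) := by
  rw [← ofReal_norm, ← ENNReal.ofReal_pow (norm_nonneg _)]
  exact ENNReal.ofReal_le_ofReal (norm_apply_sq_le_norm_sq_mul_sum _ _)

lemma enorm_fderiv_diagonal_sq_le (w : EuclideanSpace ℝ (Fin 2) → F) {ε : ℝ} (hε : ε ^ 2 = 1)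
    (x : EuclideanSpace ℝ (Fin 2)) :
    ‖fderiv ℝ w x !₂[ε, 1]‖ₑ ^ 2 ≤ ENNReal.ofReal (2 * energyDensity w x) := by
  have hnorm : ‖(!₂[ε, 1] : EuclideanSpace ℝ (Fin 2))‖ ^ 2 = 2 := by
    norm_num [EuclideanSpace.norm_sq_eq, hε]
  simpa only [hnorm] using enorm_fderiv_apply_sq_le w x !₂[ε, 1]

lemma integrableOn_energyDensity {μ : Measure (EuclideanSpace ℝ ι)}
    [IsFiniteMeasureOnCompacts μ] {w : EuclideanSpace ℝ ι → F} {U : Set (EuclideanSpace ℝ ι)}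
    (hU : IsOpen U) (hUc : IsCompact (closure U)) (hUd : UniqueDiffOn ℝ (closure U))
    (hw : ContDiffOn ℝ 1 w (closure U)) : IntegrableOn (energyDensity w) U μ := by
  have hcont : ContinuousOn (fun x => ∑ i, ‖fderivWithin ℝ w (closure U) x
      (EuclideanSpace.single i 1)‖ ^ 2) (closure U) :=
    continuousOn_finsetSum _ fun i _ =>
      ((hw.continuousOn_fderivWithin hUd le_rfl).clm_apply continuousOn_const).norm.pow 2
  refine ((hcont.integrableOn_compact hUc).mono_set subset_closure).congr_fun ?_ hU.measurableSet
  intro x hx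
  have hfderiv : fderivWithin ℝ w (closure U) x = fderiv ℝ w x :=
    fderivWithin_of_mem_nhds (Filter.mem_of_superset (hU.mem_nhds hx) subset_closure)
  simp only [energyDensity, hfderiv]

end EnergyDensity

section HalfDisk

lemma halfDisk_eq_ball_inter :
    halfDisk = Metric.ball 0 1 ∩ {x : EuclideanSpace ℝ (Fin 2) | 0 < x 1} := by
  ext x
  simp [halfDisk]

lemma isOpen_halfDisk : IsOpen halfDisk := by
  rw [halfDisk_eq_ball_inter]
  exact Metric.isOpen_ball.inter (isOpen_lt continuous_const (by fun_prop))

lemma convex_halfDisk : Convex ℝ halfDisk := by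
  rw [halfDisk_eq_ball_inter]
  exact (convex_ball _ _).inter
    (convex_halfSpace_gt (EuclideanSpace.proj (𝕜 := ℝ) (1 : Fin 2)).toLinearMap.isLinear 0)

lemma isCompact_closure_halfDisk : IsCompact (closure halfDisk) :=
  (Metric.isBounded_ball.subset
    (halfDisk_eq_ball_inter.trans_subset inter_subset_left)).isCompact_closure

lemma norm_lt_one_iff_sq_add_sq_lt_one (x y : ℝ) :
    ‖(!₂[x, y] : EuclideanSpace ℝ (Fin 2))‖ < 1 ↔ x ^ 2 + y ^ 2 < 1 := by
  simp [EuclideanSpace.norm_eq, Real.sqrt_lt' zero_lt_one]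

lemma nonempty_halfDisk : halfDisk.Nonempty :=
  ⟨!₂[0, 1 / 2], (norm_lt_one_iff_sq_add_sq_lt_one _ _).2 (by norm_num), by norm_num⟩

lemma uniqueDiffOn_closure_halfDisk : UniqueDiffOn ℝ (closure halfDisk) :=
  uniqueDiffOn_convex convex_halfDisk.closure
    (nonempty_halfDisk.mono (interior_maximal subset_closure isOpen_halfDisk))

lemma mem_closure_halfDisk {x : EuclideanSpace ℝ (Fin 2)} (hx : ‖x‖ ≤ 1) (hx₁ : 0 ≤ x 1) :
    x ∈ closure halfDisk := by
  obtain ⟨p, hp, hp₁⟩ := nonempty_halfDisk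
  have hseg : openSegment ℝ x p ⊆ halfDisk := by
    rintro _ ⟨a, b, ha, hb, hab, rfl⟩
    constructor
    · calc ‖a • x + b • p‖ ≤ a * ‖x‖ + b * ‖p‖ := by
            simpa [norm_smul, abs_of_pos ha, abs_of_pos hb] using norm_add_le (a • x) (b • p)
        _ < 1 := by nlinarith
    · simp only [PiLp.add_apply, PiLp.smul_apply, smul_eq_mul]
      positivity
  exact closure_mono hseg (closure_openSegment (𝕜 := ℝ) x p ▸ left_mem_segment ℝ x p)

lemma continuousOn_chord_sq_div {F : Type*} [SeminormedAddCommGroup F]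
    {w : EuclideanSpace ℝ (Fin 2) → F} (hw : ContinuousOn w (closure halfDisk)) :
    ContinuousOn (fun t : ℝ => ‖w !₂[t, 0]‖ ^ 2 / (1 - |t|)) (Ioo (-1) 1) := by
  have hchord : MapsTo (fun t : ℝ => (!₂[t, 0] : EuclideanSpace ℝ (Fin 2))) (Ioo (-1) 1)
      (closure halfDisk) := fun t ht =>
    mem_closure_halfDisk ((norm_lt_one_iff_sq_add_sq_lt_one _ _).2
      (by simpa [sq_lt_one_iff_abs_lt_one] using abs_lt.2 ht)).le (by simp)
  refine ((hw.comp (by fun_prop) hchord).norm.pow 2).div (by fun_prop) fun t ht => ?_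
  exact (sub_pos.2 (abs_lt.2 ht)).ne'

end HalfDisk

section DiagonalShear

/-- The shear `(t, s) ↦ (t + ε s, s)`. For fixed `t` it parametrizes by height the line through
the chord point `(t, 0)` in the direction `(ε, 1)`. -/
def shear (ε : ℝ) (p : ℝ × ℝ) : EuclideanSpace ℝ (Fin 2) := !₂[p.1 + ε * p.2, p.2]

/-- The part of the half disk swept, for `ε = ± 1`, by the segments in the direction `(ε, 1)`
from the chord points `(t, 0)` with `0 ≤ ε t < 1`. -/
def halfDiskSector (ε : ℝ) : Set (EuclideanSpace ℝ (Fin 2)) := halfDisk ∩ {x | x 1 ≤ ε * x 0}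

lemma measurableSet_halfDiskSector (ε : ℝ) : MeasurableSet (halfDiskSector ε) :=
  isOpen_halfDisk.measurableSet.inter
    (isClosed_le (by fun_prop) (by fun_prop : Continuous fun x : EuclideanSpace ℝ (Fin 2) =>
      ε * x 0)).measurableSet

lemma disjoint_halfDiskSector_neg (ε : ℝ) :
    Disjoint (halfDiskSector ε) (halfDiskSector (-ε)) := by
  refine Set.disjoint_left.2 fun x hx hx' => ?_
  have hpos : 0 < x 1 := hx.1.2
  have hle : x 1 ≤ ε * x 0 := hx.2
  have hle' : x 1 ≤ -ε * x 0 := hx'.2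
  linarith

lemma measurePreserving_shear (ε : ℝ) : MeasurePreserving (shear ε) := by
  have hskew : MeasurePreserving (fun p : ℝ × ℝ => (p.1, p.2 + ε * p.1)) :=
    (MeasurePreserving.id volume).skew_product (by fun_prop)
      (.of_forall fun s => map_add_right_eq_self volume (ε * s))
  have hshear : MeasurePreserving (fun p : ℝ × ℝ => (p.1 + ε * p.2, p.2)) :=
    (Measure.measurePreserving_swap.comp hskew).comp Measure.measurePreserving_swap
  exact ((PiLp.volume_preserving_toLp (Fin 2)).comp
    ((volume_preserving_finTwoArrow ℝ).symm _)).comp hshear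

lemma hasDerivAt_shear (ε t s : ℝ) : HasDerivAt (fun s => shear ε (t, s)) !₂[ε, 1] s := by
  have hline : (fun s => shear ε (t, s)) = fun s : ℝ => !₂[t, 0] + s • !₂[ε, 1] := by
    ext s i
    fin_cases i <;> simp [shear, mul_comm]
  rw [hline]
  simpa using ((hasDerivAt_id s).smul_const (!₂[ε, 1] : EuclideanSpace ℝ (Fin 2))).const_add
    (!₂[t, 0] : EuclideanSpace ℝ (Fin 2))

lemma exists_mem_Ioo_add_sq_add_sq_eq_one {r : ℝ} (hr₀ : 0 ≤ r) (hr₁ : r < 1) :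
    ∃ a ∈ Ioo 0 (1 - r), (r + a) ^ 2 + a ^ 2 = 1 := by
  have hcont : ContinuousOn (fun a => (r + a) ^ 2 + a ^ 2) (Icc 0 (1 - r)) := by fun_prop
  exact intermediate_value_Ioo (by linarith) hcont ⟨by nlinarith, by nlinarith⟩

lemma exists_shear_norm_eq_one {ε t : ℝ} (hε : ε ^ 2 = 1) (ht₀ : 0 ≤ ε * t) (ht₁ : ε * t < 1) :
    ∃ a ∈ Ioo 0 (1 - ε * t), ‖shear ε (t, a)‖ = 1 ∧
      ∀ s ∈ Ioo 0 a, shear ε (t, s) ∈ halfDiskSector ε := by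
  obtain ⟨a, ha, harc⟩ := exists_mem_Ioo_add_sq_add_sq_eq_one ht₀ ht₁
  have hsq (s : ℝ) : (t + ε * s) ^ 2 + s ^ 2 = (ε * t + s) ^ 2 + s ^ 2 := by
    linear_combination (s ^ 2 - t ^ 2) * hε
  refine ⟨a, ha, ?_, fun s hs => ⟨⟨?_, hs.1⟩, ?_⟩⟩
  · simp [shear, EuclideanSpace.norm_eq, hsq, harc]
  · rw [shear, norm_lt_one_iff_sq_add_sq_lt_one, hsq, ← harc]
    obtain ⟨hs₀, hsa⟩ := hs
    gcongr
  · have hεs : ε * (t + ε * s) = ε * t + s := by linear_combination s * hε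
    simp [shear, hεs, ht₀]

end DiagonalShear

section TraceEstimate

variable {F : Type*} [NormedAddCommGroup F] [NormedSpace ℝ F] [CompleteSpace F]
  {w : EuclideanSpace ℝ (Fin 2) → F}

lemma enorm_chord_sq_div_le_lintegral_shear (hw : ContinuousOn w (closure halfDisk))
    (hw' : DifferentiableOn ℝ w halfDisk)
    (hbd : ∀ x : EuclideanSpace ℝ (Fin 2), ‖x‖ = 1 → 0 ≤ x 1 → w x = 0)
    {ε t : ℝ} (hε : ε ^ 2 = 1) (ht₀ : 0 ≤ ε * t) (ht₁ : ε * t < 1) :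
    ‖w !₂[t, 0]‖ₑ ^ 2 / ENNReal.ofReal (1 - ε * t) ≤
      ∫⁻ s, (halfDiskSector ε).indicator (fun x => ‖fderiv ℝ w x !₂[ε, 1]‖ₑ ^ 2)
        (shear ε (t, s)) := by
  obtain ⟨a, ⟨ha₀, ha₁⟩, hnorm, hsector⟩ := exists_shear_norm_eq_one hε ht₀ ht₁
  have hγ : Continuous fun s => shear ε (t, s) :=
    continuous_iff_continuousAt.2 fun s => (hasDerivAt_shear ε t s).continuousAt
  have hclosure : MapsTo (fun s => shear ε (t, s)) (Icc 0 a) (closure halfDisk) := by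
    rw [← closure_Ioo ha₀.ne]
    exact MapsTo.closure (fun s hs => (hsector s hs).1) hγ
  have hderiv : ∀ s ∈ Ioo 0 a, HasDerivAt (fun s => w (shear ε (t, s)))
      (fderiv ℝ w (shear ε (t, s)) !₂[ε, 1]) s := fun s hs =>
    (hw'.differentiableAt (isOpen_halfDisk.mem_nhds (hsector s hs).1)).hasFDerivAt.comp_hasDerivAt
      s (hasDerivAt_shear ε t s)
  have hend : w (shear ε (t, a)) = 0 := hbd _ hnorm ha₀.le
  have hstart : shear ε (t, 0) = !₂[t, 0] := by simp [shear]
  refine ENNReal.div_le_of_le_mul' ?_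
  calc ‖w !₂[t, 0]‖ₑ ^ 2 = ‖w (shear ε (t, a)) - w (shear ε (t, 0))‖ₑ ^ 2 := by
        rw [hend, hstart, zero_sub, enorm_neg]
    _ ≤ ENNReal.ofReal (a - 0) * ∫⁻ s in Ioo 0 a, ‖deriv (fun s => w (shear ε (t, s))) s‖ₑ ^ 2 :=
        enorm_sub_sq_le_mul_lintegral_enorm_deriv_sq ha₀.le (hw.comp hγ.continuousOn hclosure)
          fun s hs => (hderiv s hs).differentiableAt.differentiableWithinAt
    _ ≤ ENNReal.ofReal (1 - ε * t) * ∫⁻ s in Ioo 0 a, (halfDiskSector ε).indicator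
          (fun x => ‖fderiv ℝ w x !₂[ε, 1]‖ₑ ^ 2) (shear ε (t, s)) := by
        gcongr ENNReal.ofReal ?_ * ?_
        · linarith
        · refine setLIntegral_mono' measurableSet_Ioo fun s hs => ?_
          rw [(hderiv s hs).deriv, indicator_of_mem (hsector s hs)]
    _ ≤ _ := by gcongr; exact Measure.restrict_le_self

lemma lintegral_half_chord_le_lintegral_sector (hw : ContinuousOn w (closure halfDisk))
    (hw' : DifferentiableOn ℝ w halfDisk)
    (hbd : ∀ x : EuclideanSpace ℝ (Fin 2), ‖x‖ = 1 → 0 ≤ x 1 → w x = 0)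
    {ε : ℝ} (hε : ε ^ 2 = 1) :
    ∫⁻ t in Ioo (-1) 1 ∩ {t | 0 ≤ ε * t}, ‖w !₂[t, 0]‖ₑ ^ 2 / ENNReal.ofReal (1 - |t|) ≤
      ∫⁻ x in halfDiskSector ε, ENNReal.ofReal (2 * energyDensity w x) := by
  borelize F
  set G := (halfDiskSector ε).indicator fun x => ‖fderiv ℝ w x !₂[ε, 1]‖ₑ ^ 2
  have hG : Measurable G :=
    ((measurable_fderiv_apply_const ℝ w _).enorm.pow_const 2).indicator
      (measurableSet_halfDiskSector ε)
  have hhalf : MeasurableSet (Ioo (-1) 1 ∩ {t : ℝ | 0 ≤ ε * t}) :=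
    measurableSet_Ioo.inter (measurableSet_le measurable_const (measurable_const_mul ε))
  calc ∫⁻ t in Ioo (-1) 1 ∩ {t | 0 ≤ ε * t}, ‖w !₂[t, 0]‖ₑ ^ 2 / ENNReal.ofReal (1 - |t|)
      ≤ ∫⁻ t in Ioo (-1) 1 ∩ {t | 0 ≤ ε * t}, ∫⁻ s, G (shear ε (t, s)) := by
        refine setLIntegral_mono' hhalf fun t ⟨ht, ht₀⟩ => ?_
        have habs : |t| = ε * t := by
          refine (sq_eq_sq₀ (abs_nonneg t) ht₀).1 ?_
          rw [sq_abs]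
          linear_combination -t ^ 2 * hε
        rw [habs]
        exact enorm_chord_sq_div_le_lintegral_shear hw hw' hbd hε ht₀ (habs ▸ abs_lt.2 ht)
    _ ≤ ∫⁻ t, ∫⁻ s, G (shear ε (t, s)) := setLIntegral_le_lintegral _ _
    _ = ∫⁻ p, G (shear ε p) :=
        (lintegral_prod _ (hG.comp (measurePreserving_shear ε).measurable).aemeasurable).symm
    _ = ∫⁻ x in halfDiskSector ε, ‖fderiv ℝ w x !₂[ε, 1]‖ₑ ^ 2 := by
        rw [(measurePreserving_shear ε).lintegral_comp hG,
          lintegral_indicator (measurableSet_halfDiskSector ε)]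
    _ ≤ _ := lintegral_mono fun x => enorm_fderiv_diagonal_sq_le w hε x

lemma lintegral_chord_le_lintegral_halfDisk (hw : ContinuousOn w (closure halfDisk))
    (hw' : DifferentiableOn ℝ w halfDisk)
    (hbd : ∀ x : EuclideanSpace ℝ (Fin 2), ‖x‖ = 1 → 0 ≤ x 1 → w x = 0) :
    ∫⁻ t in Ioo (-1) 1, ‖w !₂[t, 0]‖ₑ ^ 2 / ENNReal.ofReal (1 - |t|) ≤
      ∫⁻ x in halfDisk, ENNReal.ofReal (2 * energyDensity w x) := by
  have hcover : Ioo (-1 : ℝ) 1 ⊆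
      Ioo (-1) 1 ∩ {t | 0 ≤ 1 * t} ∪ Ioo (-1) 1 ∩ {t | 0 ≤ -1 * t} := fun t ht =>
    (le_total 0 t).imp (fun h => ⟨ht, by simpa using h⟩) fun h => ⟨ht, by simpa using h⟩
  calc ∫⁻ t in Ioo (-1) 1, ‖w !₂[t, 0]‖ₑ ^ 2 / ENNReal.ofReal (1 - |t|)
      ≤ _ := (lintegral_mono_set hcover).trans (lintegral_union_le _ _ _)
    _ ≤ (∫⁻ x in halfDiskSector 1, ENNReal.ofReal (2 * energyDensity w x)) +
          ∫⁻ x in halfDiskSector (-1), ENNReal.ofReal (2 * energyDensity w x) :=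
        add_le_add (lintegral_half_chord_le_lintegral_sector hw hw' hbd (by norm_num))
          (lintegral_half_chord_le_lintegral_sector hw hw' hbd (by norm_num))
    _ = ∫⁻ x in halfDiskSector 1 ∪ halfDiskSector (-1), ENNReal.ofReal (2 * energyDensity w x) :=
        (lintegral_union (measurableSet_halfDiskSector _) (disjoint_halfDiskSector_neg 1)).symm
    _ ≤ _ := lintegral_mono_set (union_subset inter_subset_left inter_subset_left)

end TraceEstimate

theorem stmt_1_general {F : Type*} [NormedAddCommGroup F] [NormedSpace ℝ F] [CompleteSpace F]
    (w : EuclideanSpace ℝ (Fin 2) → F) (hw : ContinuousOn w (closure halfDisk))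
    (hw' : DifferentiableOn ℝ w halfDisk) (henergy : IntegrableOn (energyDensity w) halfDisk)
    (hbd : ∀ x : EuclideanSpace ℝ (Fin 2), ‖x‖ = 1 → 0 ≤ x 1 → w x = 0) :
    IntervalIntegrable (fun t => ‖w !₂[t, 0]‖ ^ 2 / (1 - |t|)) volume (-1) 1 ∧
      ∫ t in (-1 : ℝ)..1, ‖w !₂[t, 0]‖ ^ 2 / (1 - |t|) ≤
        2 * ∫ x in halfDisk, energyDensity w x := by
  have hpos : ∀ t ∈ Ioo (-1 : ℝ) 1, 0 < 1 - |t| := fun t ht => sub_pos.2 (abs_lt.2 ht)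
  rw [intervalIntegrable_iff_integrableOn_Ioo_of_le (by norm_num),
    intervalIntegral.integral_of_le (by norm_num), integral_Ioc_eq_integral_Ioo,
    ← integral_const_mul]
  refine integrable_and_integral_le_of_lintegral_ofReal_le
    ((continuousOn_chord_sq_div hw).aestronglyMeasurable measurableSet_Ioo)
    (ae_restrict_of_forall_mem measurableSet_Ioo fun t ht =>
      div_nonneg (sq_nonneg _) (hpos t ht).le) (henergy.const_mul 2)
    (.of_forall fun x => mul_nonneg zero_le_two (energyDensity_nonneg w x)) ?_
  refine (setLIntegral_mono' measurableSet_Ioo fun t ht => ?_).trans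
    (lintegral_chord_le_lintegral_halfDisk hw hw' hbd)
  rw [ENNReal.ofReal_div_of_pos (hpos t ht), ENNReal.ofReal_pow (norm_nonneg _), ofReal_norm]

/-- Boundary Hardy-type trace estimate: if `w` is `C¹` on the closed upper half disk and vanishes
on the arc `∂^A`, then `∫_{−1}^{1} |w(x₁,0)|²/(1 − |x₁|) dx₁ ≤ 4 ∫_{D⁺} |∇w|²`. -/
theorem stmt_1 (N : ℕ) (hN : 1 ≤ N)
    (w : EuclideanSpace ℝ (Fin 2) → EuclideanSpace ℝ (Fin N))
    (hw : ContDiffOn ℝ 1 w (closure halfDisk))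
    (hbd : ∀ x : EuclideanSpace ℝ (Fin 2), ‖x‖ = 1 → 0 ≤ x 1 → w x = 0) :
    (∫ t in (-1 : ℝ)..1, ‖w ((WithLp.equiv 2 (Fin 2 → ℝ)).symm ![t, 0])‖ ^ 2 / (1 - |t|)) ≤
      4 * ∫ x in halfDisk, gradSq w x := by
  have htrace := (stmt_1_general w hw.continuousOn
    ((hw.differentiableOn one_ne_zero).mono subset_closure)
    (integrableOn_energyDensity isOpen_halfDisk isCompact_closure_halfDisk
      uniqueDiffOn_closure_halfDisk hw) hbd).2
  exact htrace.trans (mul_le_mul_of_nonneg_right (by norm_num)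
    (integral_nonneg (energyDensity_nonneg w)))
end

section
/- For every δ > 0 there exists l > 1, depending only on δ, with the following property: for all integers 0 ≤ k ≤ n, if u : [−3l, 3l] × [0, π] → ℝⁿ is a nonconstant map that is smooth on the closed half cylinder, harmonic (∂_t²u + ∂_θ²u = 0 componentwise), and satisfies the Euclidean free boundary conditions relative to ℝᵏ ⊂ ℝⁿ (for θ ∈ {0, π}: u^{k+1} = ⋯ = uⁿ = 0 and ∂_θ u¹ = ⋯ = ∂_θ uᵏ = 0), then ∫_{−l}^{l} ∫_0^π |∂_θ u|² dθ dt < δ ∫_{−2l}^{2l} ∫_0^π (|∂_t u|² + |∂_θ u|²) dθ dt. (The Euclidean case of the theta-energy estimate Theorem 8.3, which the paper invokes — without any smallness-of-energy hypothesis — for free boundary harmonic maps into (ℝⁿ, ℝᵏ) in Case 2 of the proof of Lemma 8.4.) -/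
open MeasureTheory

/-!
Write `m t` for the `V`-component of the average of `u` over the slice `{t} × [a, b]` and let
`A t = ∫ ⟪∂ₜ u, u - m t⟫ dθ`. Harmonicity and an integration by parts in `θ`, whose boundary terms
vanish by the free boundary condition, show that `A'` is at least the angular energy of the slice.
Since `u (t, a) ∈ V`, the deviation `u - m t` is bounded by twice `∫ |∂_θ u| dθ`, so `|A|` is at
most `b - a` times the full energy `E` of the slice. Hence the angular energy over `[-l, l]` is at
most `A s - A (-s) ≤ (b - a) (E s + E (-s))` for every `s ∈ [l, 2l]`, and averaging over `s` gains
the factor `1 / l`. The inequality is strict because a harmonic map is real analytic, so vanishing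
energy over `[-2l, 2l]` would force it to be constant.
-/

open Set Filter Topology
open scoped InnerProductSpace Interval

section IntervalIntegral

variable {a b : ℝ}

lemma sq_intervalIntegral_le_mul_intervalIntegral_sq (hab : a ≤ b) {f : ℝ → ℝ}
    (hf : IntervalIntegrable f volume a b) (hf2 : IntervalIntegrable (fun x ↦ f x ^ 2) volume a b) :
    (∫ x in a..b, f x) ^ 2 ≤ (b - a) * ∫ x in a..b, f x ^ 2 := by
  have expand (m : ℝ) : ∫ x in a..b, (m - f x) ^ 2 =
      (b - a) * (m * m) + -(2 * ∫ x in a..b, f x) * m + ∫ x in a..b, f x ^ 2 := by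
    have hcross : IntervalIntegrable (fun x ↦ 2 * m * f x) volume a b := hf.const_mul _
    simp only [sub_sq]
    rw [intervalIntegral.integral_add (intervalIntegrable_const.sub hcross) hf2,
      intervalIntegral.integral_sub intervalIntegrable_const hcross,
      intervalIntegral.integral_const, intervalIntegral.integral_const_mul, smul_eq_mul]
    ring
  have hdiscrim := discrim_le_zero fun m ↦
    (intervalIntegral.integral_nonneg hab fun x _ ↦ sq_nonneg (m - f x)).trans_eq (expand m)
  rw [discrim] at hdiscrim
  linarith

variable {F : Type*} [NormedAddCommGroup F] [NormedSpace ℝ F]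

lemma norm_sub_le_intervalIntegral_norm_deriv [CompleteSpace F] {v v' : ℝ → F}
    (hv : ∀ x, HasDerivAt v (v' x) x) (hv' : Continuous v') {x y : ℝ}
    (hx : x ∈ Icc a b) (hy : y ∈ Icc a b) :
    ‖v y - v x‖ ≤ ∫ z in a..b, ‖v' z‖ := by
  wlog hxy : x ≤ y generalizing x y
  · rw [norm_sub_rev]
    exact this hy hx (le_of_not_ge hxy)
  calc ‖v y - v x‖ = ‖∫ z in x..y, v' z‖ := by
        rw [intervalIntegral.integral_eq_sub_of_hasDerivAt (fun z _ ↦ hv z)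
          (hv'.intervalIntegrable _ _)]
    _ ≤ ∫ z in x..y, ‖v' z‖ := intervalIntegral.norm_integral_le_integral_norm hxy
    _ ≤ ∫ z in a..b, ‖v' z‖ :=
        intervalIntegral.integral_mono_interval hx.1 hxy hy.2
          (Eventually.of_forall fun _ ↦ norm_nonneg _) (hv'.norm.intervalIntegrable _ _)

lemma norm_intervalAverage_sub_le [CompleteSpace F] (hab : a < b) {v : ℝ → F} (hv : Continuous v)
    {c : F} {R : ℝ} (h : ∀ x ∈ Icc a b, ‖v x - c‖ ≤ R) : ‖(⨍ x in a..b, v x) - c‖ ≤ R := by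
  have hmem : (⨍ x in a..b, v x) ∈ Metric.closedBall c R := by
    refine (convex_closedBall c R).set_average_mem Metric.isClosed_closedBall ?_ ?_ ?_ ?_
    · simp [uIoc_of_le hab.le, hab]
    · simp [uIoc_of_le hab.le]
    · refine ae_restrict_of_forall_mem measurableSet_uIoc fun x hx ↦ ?_
      rw [uIoc_of_le hab.le] at hx
      simpa [dist_eq_norm] using h x (Ioc_subset_Icc_self hx)
    · exact (hv.intervalIntegrable a b).def'
  simpa [dist_eq_norm] using hmem

lemma intervalIntegral_le_add_of_le_deriv {A A' f E : ℝ → ℝ} {l s : ℝ} (hl : 0 ≤ l) (hls : l ≤ s)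
    (hA : ∀ t ∈ Icc (-s) s, HasDerivAt A (A' t) t) (hf : Continuous f) (hf0 : ∀ t, 0 ≤ f t)
    (hfA : ∀ t ∈ Icc (-s) s, f t ≤ A' t) (hAE : ∀ t ∈ Icc (-s) s, |A t| ≤ E t) :
    ∫ t in (-l)..l, f t ≤ E s + E (-s) := by
  have hs : -s ≤ s := by linarith
  calc ∫ t in (-l)..l, f t ≤ ∫ t in (-s)..s, f t :=
        intervalIntegral.integral_mono_interval (by linarith) (by linarith) hls
          (Eventually.of_forall hf0) (hf.intervalIntegrable _ _)
    _ ≤ A s - A (-s) :=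
        intervalIntegral.integral_le_sub_of_hasDeriv_right_of_le hs
          (fun t ht ↦ (hA t ht).continuousAt.continuousWithinAt)
          (fun t ht ↦ (hA t (Ioo_subset_Icc_self ht)).hasDerivWithinAt)
          hf.continuousOn.integrableOn_Icc (fun t ht ↦ hfA t (Ioo_subset_Icc_self ht))
    _ ≤ |A s| + |A (-s)| := (le_abs_self _).trans (abs_sub _ _)
    _ ≤ E s + E (-s) := add_le_add (hAE s ⟨hs, le_rfl⟩) (hAE (-s) ⟨le_rfl, hs⟩)

lemma mul_intervalIntegral_le_of_le_deriv {A A' f E : ℝ → ℝ} {l : ℝ} (hl : 0 ≤ l)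
    (hA : ∀ t ∈ Icc (-(2 * l)) (2 * l), HasDerivAt A (A' t) t) (hf : Continuous f)
    (hf0 : ∀ t, 0 ≤ f t) (hE : Continuous E) (hfA : ∀ t ∈ Icc (-(2 * l)) (2 * l), f t ≤ A' t)
    (hAE : ∀ t ∈ Icc (-(2 * l)) (2 * l), |A t| ≤ E t) :
    l * ∫ t in (-l)..l, f t ≤ ∫ t in (-(2 * l))..(2 * l), E t := by
  have hEint (x y : ℝ) : IntervalIntegrable E volume x y := hE.intervalIntegrable x y
  have hEneg : IntervalIntegrable (fun s ↦ E (-s)) volume l (2 * l) :=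
    (hE.comp continuous_neg).intervalIntegrable _ _
  have hE_mid : 0 ≤ ∫ t in (-l)..l, E t :=
    intervalIntegral.integral_nonneg (by linarith) fun t ht ↦
      (abs_nonneg _).trans (hAE t ⟨by linarith [ht.1], by linarith [ht.2]⟩)
  have hE_ends : l * ∫ t in (-l)..l, f t ≤ ∫ s in l..(2 * l), (E s + E (-s)) := by
    have hconst : l * ∫ t in (-l)..l, f t = ∫ _ in l..(2 * l), ∫ t in (-l)..l, f t := by
      rw [intervalIntegral.integral_const, smul_eq_mul]
      ring
    rw [hconst]
    refine intervalIntegral.integral_mono_on (by linarith) intervalIntegrable_const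
      ((hEint _ _).add hEneg) fun s hs ↦ ?_
    have hsub : Icc (-s) s ⊆ Icc (-(2 * l)) (2 * l) := Icc_subset_Icc (neg_le_neg hs.2) hs.2
    exact intervalIntegral_le_add_of_le_deriv hl hs.1 (fun t ht ↦ hA t (hsub ht)) hf hf0
      (fun t ht ↦ hfA t (hsub ht)) fun t ht ↦ hAE t (hsub ht)
  rw [intervalIntegral.integral_add (hEint _ _) hEneg, intervalIntegral.integral_comp_neg]
    at hE_ends
  rw [← intervalIntegral.integral_add_adjacent_intervals (hEint (-(2 * l)) l) (hEint l (2 * l)),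
    ← intervalIntegral.integral_add_adjacent_intervals (hEint (-(2 * l)) (-l)) (hEint (-l) l)]
  linarith

end IntervalIntegral

section Hilbert

variable {a b : ℝ} {F : Type*} [NormedAddCommGroup F] [InnerProductSpace ℝ F]

lemma norm_sub_starProjection_intervalAverage_le [CompleteSpace F] (V : Submodule ℝ F)
    [V.HasOrthogonalProjection] (hab : a < b) {v v' : ℝ → F}
    (hv : ∀ x, HasDerivAt v (v' x) x) (hv' : Continuous v') (ha : v a ∈ V)
    {y : ℝ} (hy : y ∈ Icc a b) :
    ‖v y - V.starProjection (⨍ x in a..b, v x)‖ ≤ 2 * ∫ x in a..b, ‖v' x‖ := by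
  have hvc : Continuous v := continuous_iff_continuousAt.2 fun x ↦ (hv x).continuousAt
  have hosc : ∀ x ∈ Icc a b, ‖v x - v a‖ ≤ ∫ x in a..b, ‖v' x‖ := fun x hx ↦
    norm_sub_le_intervalIntegral_norm_deriv hv hv' ⟨le_rfl, hab.le⟩ hx
  have hsplit : v y - V.starProjection (⨍ x in a..b, v x) =
      (v y - v a) - V.starProjection ((⨍ x in a..b, v x) - v a) := by
    rw [map_sub, V.starProjection_eq_self_iff.2 ha]
    abel
  calc ‖v y - V.starProjection (⨍ x in a..b, v x)‖
      ≤ ‖v y - v a‖ + ‖V.starProjection ((⨍ x in a..b, v x) - v a)‖ := by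
        rw [hsplit]
        exact norm_sub_le _ _
    _ ≤ ‖v y - v a‖ + ‖(⨍ x in a..b, v x) - v a‖ := by
        gcongr
        exact V.norm_starProjection_apply_le _
    _ ≤ 2 * ∫ x in a..b, ‖v' x‖ := by
        linarith [hosc y hy, norm_intervalAverage_sub_le hab hvc hosc]

lemma abs_intervalIntegral_inner_le (hab : a ≤ b) {p q w : ℝ → F} (hp : Continuous p)
    (hq : Continuous q) (hw : Continuous w)
    (hwq : ∀ x ∈ Icc a b, ‖w x‖ ≤ 2 * ∫ y in a..b, ‖q y‖) :
    |∫ x in a..b, ⟪p x, w x⟫_ℝ| ≤ (b - a) * ∫ x in a..b, (‖p x‖ ^ 2 + ‖q x‖ ^ 2) := by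
  have sq_integrable {f : ℝ → F} (hf : Continuous f) :
      IntervalIntegrable (fun x ↦ ‖f x‖ ^ 2) volume a b := (hf.norm.pow 2).intervalIntegrable _ _
  have sq_le {f : ℝ → F} (hf : Continuous f) :
      (∫ x in a..b, ‖f x‖) ^ 2 ≤ (b - a) * ∫ x in a..b, ‖f x‖ ^ 2 :=
    sq_intervalIntegral_le_mul_intervalIntegral_sq hab (hf.norm.intervalIntegrable _ _)
      (sq_integrable hf)
  calc |∫ x in a..b, ⟪p x, w x⟫_ℝ| ≤ ∫ x in a..b, |⟪p x, w x⟫_ℝ| :=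
        intervalIntegral.abs_integral_le_integral_abs hab
    _ ≤ ∫ x in a..b, ‖p x‖ * (2 * ∫ y in a..b, ‖q y‖) :=
        intervalIntegral.integral_mono_on hab ((hp.inner hw).abs.intervalIntegrable _ _)
          ((hp.norm.mul continuous_const).intervalIntegrable _ _) fun x hx ↦
            (abs_real_inner_le_norm _ _).trans <|
              mul_le_mul_of_nonneg_left (hwq x hx) (norm_nonneg _)
    _ = 2 * (∫ x in a..b, ‖p x‖) * ∫ x in a..b, ‖q x‖ := by
        rw [intervalIntegral.integral_mul_const]
        ring
    _ ≤ (∫ x in a..b, ‖p x‖) ^ 2 + (∫ x in a..b, ‖q x‖) ^ 2 := two_mul_le_add_sq _ _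
    _ ≤ (b - a) * ∫ x in a..b, (‖p x‖ ^ 2 + ‖q x‖ ^ 2) := by
        rw [intervalIntegral.integral_add (sq_integrable hp) (sq_integrable hq), mul_add]
        exact add_le_add (sq_le hp) (sq_le hq)

end Hilbert

section DirDeriv

variable {E F : Type*} [NormedAddCommGroup E] [NormedSpace ℝ E] [NormedAddCommGroup F]

/-- The derivative of `u` in the direction `e`, as a function of the base point, so that it can be
iterated. -/
noncomputable def dirDeriv [NormedSpace ℝ F] (e : E) (u : E → F) : E → F :=
  fun p ↦ fderiv ℝ u p e

lemma contDiff_dirDeriv [NormedSpace ℝ F] {m n : WithTop ℕ∞} {u : E → F} (hu : ContDiff ℝ n u)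
    (hmn : m + 1 ≤ n) (e : E) : ContDiff ℝ m (dirDeriv e u) :=
  (hu.fderiv_right hmn).clm_apply contDiff_const

lemma continuous_dirDeriv [NormedSpace ℝ F] {u : E → F} (hu : ContDiff ℝ 1 u) (e : E) :
    Continuous (dirDeriv e u) :=
  (contDiff_dirDeriv hu (m := 0) (by simp) e).continuous

lemma dirDeriv_dirDeriv [NormedSpace ℝ F] {u : E → F} (hu : ContDiff ℝ 2 u) (e p : E) :
    dirDeriv e (dirDeriv e u) p = iteratedFDeriv ℝ 2 u p ![e, e] := by
  have hd : DifferentiableAt ℝ (fderiv ℝ u) p :=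
    (hu.fderiv_right one_add_one_eq_two.le).differentiable one_ne_zero p
  simp only [iteratedFDeriv_two_apply, Matrix.cons_val_zero, Matrix.cons_val_one]
  unfold dirDeriv
  rw [fderiv_clm_apply hd (differentiableAt_const e)]
  simp

lemma dirDeriv_comp_clm [NormedSpace ℝ F] {G : Type*} [NormedAddCommGroup G] [NormedSpace ℝ G]
    {u : E → F} (hu : Differentiable ℝ u) (L : G →L[ℝ] E) (e : G) :
    dirDeriv e (u ∘ L) = dirDeriv (L e) u ∘ L :=
  funext fun z ↦ congrArg (fun M : G →L[ℝ] F ↦ M e)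
    ((hu (L z)).hasFDerivAt.comp z L.hasFDerivAt).fderiv

lemma eqOn_dirDeriv [NormedSpace ℝ F] {u v : E → F} {W : Set E} (hW : IsOpen W) (h : EqOn u v W)
    (e : E) : EqOn (dirDeriv e u) (dirDeriv e v) W := fun _ hp ↦
  congrArg (fun L : E →L[ℝ] F ↦ L e) (h.eventuallyEq_of_mem (hW.mem_nhds hp)).fderiv_eq

lemma dirDeriv_inner [InnerProductSpace ℝ F] {u v : E → F} (hu : Differentiable ℝ u)
    (hv : Differentiable ℝ v) (e p : E) :
    dirDeriv e (fun q ↦ ⟪u q, v q⟫_ℝ) p = ⟪u p, dirDeriv e v p⟫_ℝ + ⟪dirDeriv e u p, v p⟫_ℝ :=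
  fderiv_inner_apply ℝ (hu p) (hv p) e

end DirDeriv

local notation "∂ₜ" => dirDeriv ((1 : ℝ), (0 : ℝ))
local notation "∂θ" => dirDeriv ((0 : ℝ), (1 : ℝ))

section Slice

variable {F : Type*} [NormedAddCommGroup F] {f : ℝ × ℝ → F}

lemma intervalIntegrable_slice (hf : Continuous f) (a b t : ℝ) :
    IntervalIntegrable (fun θ ↦ f (t, θ)) volume a b :=
  (hf.comp (Continuous.prodMk_right t)).intervalIntegrable a b

variable [NormedSpace ℝ F]

lemma hasDerivAt_slice_fst (hf : Differentiable ℝ f) (t θ : ℝ) :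
    HasDerivAt (fun s ↦ f (s, θ)) (∂ₜ f (t, θ)) t :=
  (hf (t, θ)).hasFDerivAt.comp_hasDerivAt t ((hasDerivAt_id t).prodMk (hasDerivAt_const t θ))

lemma hasDerivAt_slice_snd (hf : Differentiable ℝ f) (t θ : ℝ) :
    HasDerivAt (fun s ↦ f (t, s)) (∂θ f (t, θ)) θ :=
  (hf (t, θ)).hasFDerivAt.comp_hasDerivAt θ ((hasDerivAt_const θ t).prodMk (hasDerivAt_id θ))

lemma continuous_integral_slice (hf : Continuous f) (a b : ℝ) :
    Continuous fun t ↦ ∫ θ in a..b, f (t, θ) :=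
  intervalIntegral.continuous_parametric_intervalIntegral_of_continuous'
    (f := fun t θ ↦ f (t, θ)) hf a b

lemma hasDerivAt_integral_slice (hf : ContDiff ℝ 1 f) (a b t : ℝ) :
    HasDerivAt (fun s ↦ ∫ θ in a..b, f (s, θ)) (∫ θ in a..b, ∂ₜ f (t, θ)) t := by
  have hf' : Continuous (∂ₜ f) := continuous_dirDeriv hf _
  obtain ⟨C, hC⟩ := ((isCompact_Icc (a := t - 1) (b := t + 1)).prod
    (isCompact_uIcc (a := a) (b := b))).exists_bound_of_continuousOn hf'.continuousOn
  refine (intervalIntegral.hasDerivAt_integral_of_dominated_loc_of_deriv_le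
    (F' := fun s θ ↦ ∂ₜ f (s, θ)) (bound := fun _ ↦ C)
    (Icc_mem_nhds (sub_one_lt t) (lt_add_one t)) ?_ ?_ ?_ ?_ ?_ ?_).2
  · exact Eventually.of_forall fun s ↦
      (hf.continuous.comp (Continuous.prodMk_right s)).aestronglyMeasurable
  · exact intervalIntegrable_slice hf.continuous a b t
  · exact (hf'.comp (Continuous.prodMk_right t)).aestronglyMeasurable
  · exact Eventually.of_forall fun θ hθ s hs ↦ hC (s, θ) ⟨hs, uIoc_subset_uIcc hθ⟩
  · exact intervalIntegrable_const
  · exact Eventually.of_forall fun θ _ s _ ↦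
      hasDerivAt_slice_fst (hf.differentiable one_ne_zero) s θ

lemma integral_slice_dirDeriv_snd [CompleteSpace F] (hf : ContDiff ℝ 1 f) (a b t : ℝ) :
    ∫ θ in a..b, ∂θ f (t, θ) = f (t, b) - f (t, a) :=
  intervalIntegral.integral_eq_sub_of_hasDerivAt
    (fun θ _ ↦ hasDerivAt_slice_snd (hf.differentiable one_ne_zero) t θ)
    (intervalIntegrable_slice (continuous_dirDeriv hf _) a b t)

end Slice

section SliceEnergy

variable {F : Type*} [NormedAddCommGroup F] [NormedSpace ℝ F]

/-- The angular energy `∫ₐᵇ |∂_θ u|² dθ` of the slice `{t} × [a, b]`. -/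
noncomputable def angularSliceEnergy (u : ℝ × ℝ → F) (a b t : ℝ) : ℝ :=
  ∫ θ in a..b, ‖∂θ u (t, θ)‖ ^ 2

/-- The full energy `∫ₐᵇ (|∂ₜ u|² + |∂_θ u|²) dθ` of the slice `{t} × [a, b]`. -/
noncomputable def sliceEnergy (u : ℝ × ℝ → F) (a b t : ℝ) : ℝ :=
  ∫ θ in a..b, (‖∂ₜ u (t, θ)‖ ^ 2 + ‖∂θ u (t, θ)‖ ^ 2)

variable {u v : ℝ × ℝ → F} {a b : ℝ}

lemma continuous_energyDensity (hu : ContDiff ℝ 1 u) :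
    Continuous fun p ↦ ‖∂ₜ u p‖ ^ 2 + ‖∂θ u p‖ ^ 2 :=
  ((continuous_dirDeriv hu _).norm.pow 2).add ((continuous_dirDeriv hu _).norm.pow 2)

lemma continuous_sliceEnergy (hu : ContDiff ℝ 1 u) : Continuous (sliceEnergy u a b) :=
  continuous_integral_slice (continuous_energyDensity hu) a b

lemma continuous_angularSliceEnergy (hu : ContDiff ℝ 1 u) :
    Continuous (angularSliceEnergy u a b) :=
  continuous_integral_slice (f := fun p ↦ ‖∂θ u p‖ ^ 2)
    ((continuous_dirDeriv hu _).norm.pow 2) a b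

lemma angularSliceEnergy_nonneg (hab : a ≤ b) (t : ℝ) : 0 ≤ angularSliceEnergy u a b t :=
  intervalIntegral.integral_nonneg hab fun _ _ ↦ by positivity

lemma sliceEnergy_nonneg (hab : a ≤ b) (t : ℝ) : 0 ≤ sliceEnergy u a b t :=
  intervalIntegral.integral_nonneg hab fun _ _ ↦ by positivity

lemma sliceEnergy_eq_add (hu : ContDiff ℝ 1 u) (t : ℝ) :
    sliceEnergy u a b t = (∫ θ in a..b, ‖∂ₜ u (t, θ)‖ ^ 2) + angularSliceEnergy u a b t := by
  have hint (e : ℝ × ℝ) : IntervalIntegrable (fun θ ↦ ‖dirDeriv e u (t, θ)‖ ^ 2) volume a b :=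
    intervalIntegrable_slice (f := fun p ↦ ‖dirDeriv e u p‖ ^ 2)
      ((continuous_dirDeriv hu e).norm.pow 2) a b t
  exact intervalIntegral.integral_add (hint _) (hint _)

lemma eqOn_angularSliceEnergy {W : Set (ℝ × ℝ)} {I : Set ℝ} (hab : a ≤ b) (hW : IsOpen W)
    (hIW : I ×ˢ Icc a b ⊆ W) (huv : EqOn u v W) :
    EqOn (angularSliceEnergy u a b) (angularSliceEnergy v a b) I := fun t ht ↦
  intervalIntegral.integral_congr fun θ hθ ↦ by
    have hp : (t, θ) ∈ W := hIW ⟨ht, uIcc_of_le hab ▸ hθ⟩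
    simp only [eqOn_dirDeriv hW huv _ hp]

lemma eqOn_sliceEnergy {W : Set (ℝ × ℝ)} {I : Set ℝ} (hab : a ≤ b) (hW : IsOpen W)
    (hIW : I ×ˢ Icc a b ⊆ W) (huv : EqOn u v W) :
    EqOn (sliceEnergy u a b) (sliceEnergy v a b) I := fun t ht ↦
  intervalIntegral.integral_congr fun θ hθ ↦ by
    have hp : (t, θ) ∈ W := hIW ⟨ht, uIcc_of_le hab ▸ hθ⟩
    simp only [eqOn_dirDeriv hW huv _ hp]

end SliceEnergy

section FreeBoundary

variable {F : Type*} [NormedAddCommGroup F] [InnerProductSpace ℝ F] {V : Submodule ℝ F}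
  {u v : ℝ × ℝ → F} {I : Set ℝ} {a b t : ℝ}

/-- The map `u` is harmonic on the half cylinder `I × [a, b]` with free boundary on the linear
subspace `V`: on the edges `θ = a` and `θ = b` it takes values in `V` and meets `V`
orthogonally. -/
structure FreeBoundaryHarmonicOn (V : Submodule ℝ F) (u : ℝ × ℝ → F) (I : Set ℝ) (a b : ℝ) :
    Prop where
  laplacian_eq_zero : ∀ p ∈ I ×ˢ Icc a b, ∂ₜ (∂ₜ u) p + ∂θ (∂θ u) p = 0
  mem : ∀ t ∈ I, ∀ θ ∈ ({a, b} : Set ℝ), u (t, θ) ∈ V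
  dirDeriv_mem_orthogonal : ∀ t ∈ I, ∀ θ ∈ ({a, b} : Set ℝ), ∂θ u (t, θ) ∈ Vᗮ

/-- The function of `t` whose growth controls the angular energy: the pairing of `∂ₜ u` with the
deviation of `u` from the `V`-component of its slice average. -/
noncomputable def sliceFlux (V : Submodule ℝ F) [V.HasOrthogonalProjection] (u : ℝ × ℝ → F)
    (a b t : ℝ) : ℝ :=
  ∫ θ in a..b, ⟪∂ₜ u (t, θ), u (t, θ) - V.starProjection (⨍ φ in a..b, u (t, φ))⟫_ℝ

namespace FreeBoundaryHarmonicOn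

lemma mono {J : Set ℝ} (h : FreeBoundaryHarmonicOn V u I a b) (hJ : J ⊆ I) :
    FreeBoundaryHarmonicOn V u J a b where
  laplacian_eq_zero p hp := h.laplacian_eq_zero p ⟨hJ hp.1, hp.2⟩
  mem t ht := h.mem t (hJ ht)
  dirDeriv_mem_orthogonal t ht := h.dirDeriv_mem_orthogonal t (hJ ht)

lemma congr {W : Set (ℝ × ℝ)} (h : FreeBoundaryHarmonicOn V u I a b) (hab : a ≤ b)
    (hW : IsOpen W) (hIW : I ×ˢ Icc a b ⊆ W) (huv : EqOn u v W) :
    FreeBoundaryHarmonicOn V v I a b := by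
  have hedge : ∀ t ∈ I, ∀ θ ∈ ({a, b} : Set ℝ), (t, θ) ∈ W := by
    rintro t ht θ (rfl | rfl)
    exacts [hIW ⟨ht, left_mem_Icc.2 hab⟩, hIW ⟨ht, right_mem_Icc.2 hab⟩]
  have hd (e : ℝ × ℝ) := eqOn_dirDeriv hW huv e
  refine ⟨fun p hp ↦ ?_, fun t ht θ hθ ↦ ?_, fun t ht θ hθ ↦ ?_⟩
  · rw [← eqOn_dirDeriv hW (hd _) _ (hIW hp), ← eqOn_dirDeriv hW (hd _) _ (hIW hp)]
    exact h.laplacian_eq_zero p hp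
  · rw [← huv (hedge t ht θ hθ)]
    exact h.mem t ht θ hθ
  · rw [← hd _ (hedge t ht θ hθ)]
    exact h.dirDeriv_mem_orthogonal t ht θ hθ

lemma integral_dirDeriv_dirDeriv_mem_orthogonal [CompleteSpace F]
    (h : FreeBoundaryHarmonicOn V u I a b) (hu : ContDiff ℝ 2 u) (hab : a ≤ b) (ht : t ∈ I) :
    ∫ θ in a..b, ∂ₜ (∂ₜ u) (t, θ) ∈ Vᗮ := by
  have hflip : ∫ θ in a..b, ∂ₜ (∂ₜ u) (t, θ) = ∫ θ in a..b, -∂θ (∂θ u) (t, θ) := by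
    refine intervalIntegral.integral_congr fun θ hθ ↦ ?_
    rw [uIcc_of_le hab] at hθ
    exact eq_neg_of_add_eq_zero_left (h.laplacian_eq_zero (t, θ) ⟨ht, hθ⟩)
  rw [hflip, intervalIntegral.integral_neg,
    integral_slice_dirDeriv_snd (contDiff_dirDeriv hu one_add_one_eq_two.le _)]
  exact neg_mem (sub_mem (h.dirDeriv_mem_orthogonal t ht b (by simp))
    (h.dirDeriv_mem_orthogonal t ht a (by simp)))

lemma integral_inner_dirDeriv_dirDeriv (h : FreeBoundaryHarmonicOn V u I a b)
    (hu : ContDiff ℝ 2 u) (hab : a ≤ b) (ht : t ∈ I) :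
    ∫ θ in a..b, ⟪∂ₜ (∂ₜ u) (t, θ), u (t, θ)⟫_ℝ = angularSliceEnergy u a b t := by
  have hu1 : ContDiff ℝ 1 u := hu.of_le one_le_two
  have hd : ContDiff ℝ 1 (∂θ u) := contDiff_dirDeriv hu one_add_one_eq_two.le _
  have hprod : ContDiff ℝ 1 fun p ↦ ⟪∂θ u p, u p⟫_ℝ := hd.inner ℝ hu1
  have hedge : ∀ θ ∈ ({a, b} : Set ℝ), ⟪∂θ u (t, θ), u (t, θ)⟫_ℝ = 0 := fun θ hθ ↦
    V.inner_left_of_mem_orthogonal (h.mem t ht θ hθ) (h.dirDeriv_mem_orthogonal t ht θ hθ)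
  have hparts : ∫ θ in a..b, ∂θ (fun p ↦ ⟪∂θ u p, u p⟫_ℝ) (t, θ) = 0 := by
    rw [integral_slice_dirDeriv_snd hprod, hedge a (by simp), hedge b (by simp), sub_zero]
  have hpoint : ∫ θ in a..b, ⟪∂ₜ (∂ₜ u) (t, θ), u (t, θ)⟫_ℝ =
      ∫ θ in a..b, (‖∂θ u (t, θ)‖ ^ 2 - ∂θ (fun p ↦ ⟪∂θ u p, u p⟫_ℝ) (t, θ)) := by
    refine intervalIntegral.integral_congr fun θ hθ ↦ ?_
    rw [uIcc_of_le hab] at hθ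
    have hΔ := eq_neg_of_add_eq_zero_left (h.laplacian_eq_zero (t, θ) ⟨ht, hθ⟩)
    simp only [hΔ, dirDeriv_inner (hd.differentiable one_ne_zero) (hu1.differentiable one_ne_zero),
      inner_neg_left, real_inner_self_eq_norm_sq]
    ring
  rw [hpoint, intervalIntegral.integral_sub, hparts, sub_zero, angularSliceEnergy]
  · exact intervalIntegrable_slice (f := fun p ↦ ‖∂θ u p‖ ^ 2) (hd.continuous.norm.pow 2) a b t
  · exact intervalIntegrable_slice (continuous_dirDeriv hprod _) a b t

end FreeBoundaryHarmonicOn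

lemma sliceFlux_eq_sub [CompleteSpace F] [V.HasOrthogonalProjection] (hu : ContDiff ℝ 1 u) (t : ℝ) :
    sliceFlux V u a b t = (∫ θ in a..b, ⟪∂ₜ u (t, θ), u (t, θ)⟫_ℝ) -
      (b - a)⁻¹ * ⟪∫ θ in a..b, ∂ₜ u (t, θ), V.starProjection (∫ θ in a..b, u (t, θ))⟫_ℝ := by
  have hd : Continuous (∂ₜ u) := continuous_dirDeriv hu _
  have hconst (c : F) :
      ∫ θ in a..b, ⟪∂ₜ u (t, θ), c⟫_ℝ = ⟪∫ θ in a..b, ∂ₜ u (t, θ), c⟫_ℝ := by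
    simp only [real_inner_comm c]
    exact (innerSL ℝ c).intervalIntegral_comp_comm (intervalIntegrable_slice hd a b t)
  simp only [sliceFlux, inner_sub_right]
  rw [intervalIntegral.integral_sub, hconst, interval_average_eq, map_smul, inner_smul_right]
  · exact intervalIntegrable_slice (f := fun p ↦ ⟪∂ₜ u p, u p⟫_ℝ) (hd.inner hu.continuous) a b t
  · exact intervalIntegrable_slice (f := fun p ↦ ⟪∂ₜ u p, _⟫_ℝ) (hd.inner continuous_const) a b t

lemma hasDerivAt_sliceFlux [CompleteSpace F] [V.HasOrthogonalProjection] (hu : ContDiff ℝ 2 u)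
    (h : FreeBoundaryHarmonicOn V u I a b) (hab : a ≤ b) (ht : t ∈ I) :
    HasDerivAt (sliceFlux V u a b)
      (sliceEnergy u a b t - (b - a)⁻¹ * ‖V.starProjection (∫ θ in a..b, ∂ₜ u (t, θ))‖ ^ 2) t := by
  have hu1 : ContDiff ℝ 1 u := hu.of_le one_le_two
  have hd : ContDiff ℝ 1 (∂ₜ u) := contDiff_dirDeriv hu one_add_one_eq_two.le _
  have hdd : Continuous (∂ₜ (∂ₜ u)) := continuous_dirDeriv hd _
  have henergy : ∫ θ in a..b, ∂ₜ (fun p ↦ ⟪∂ₜ u p, u p⟫_ℝ) (t, θ) = sliceEnergy u a b t := by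
    simp only [dirDeriv_inner (hd.differentiable one_ne_zero) (hu1.differentiable one_ne_zero),
      real_inner_self_eq_norm_sq]
    rw [sliceEnergy_eq_add hu1, ← h.integral_inner_dirDeriv_dirDeriv hu hab ht]
    exact intervalIntegral.integral_add
      (intervalIntegrable_slice (f := fun p ↦ ‖∂ₜ u p‖ ^ 2) (hd.continuous.norm.pow 2) a b t)
      (intervalIntegrable_slice (f := fun p ↦ ⟪∂ₜ (∂ₜ u) p, u p⟫_ℝ) (hdd.inner hu.continuous) a b t)
  have hmean : ⟪∫ θ in a..b, ∂ₜ u (t, θ), V.starProjection (∫ θ in a..b, ∂ₜ u (t, θ))⟫_ℝ +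
      ⟪∫ θ in a..b, ∂ₜ (∂ₜ u) (t, θ), V.starProjection (∫ θ in a..b, u (t, θ))⟫_ℝ =
      ‖V.starProjection (∫ θ in a..b, ∂ₜ u (t, θ))‖ ^ 2 := by
    rw [V.inner_left_of_mem_orthogonal (V.starProjection_apply_mem _)
      (h.integral_dirDeriv_dirDeriv_mem_orthogonal hu hab ht), add_zero,
      real_inner_comm]
    exact V.re_inner_starProjection_eq_normSq _
  rw [funext (sliceFlux_eq_sub hu1), ← henergy, ← hmean]
  exact (hasDerivAt_integral_slice (hd.inner ℝ hu1) a b t).sub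
    (((hasDerivAt_integral_slice hd a b t).inner ℝ
      (V.starProjection.hasFDerivAt.comp_hasDerivAt t
        (hasDerivAt_integral_slice hu1 a b t))).const_mul _)

lemma angularSliceEnergy_le_sliceEnergy_sub (V : Submodule ℝ F)
    [V.HasOrthogonalProjection] (hu : ContDiff ℝ 1 u) (hab : a < b) (t : ℝ) :
    angularSliceEnergy u a b t ≤
      sliceEnergy u a b t - (b - a)⁻¹ * ‖V.starProjection (∫ θ in a..b, ∂ₜ u (t, θ))‖ ^ 2 := by
  have hd : Continuous (∂ₜ u) := continuous_dirDeriv hu _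
  have hproj : ‖V.starProjection (∫ θ in a..b, ∂ₜ u (t, θ))‖ ^ 2 ≤
      (b - a) * ∫ θ in a..b, ‖∂ₜ u (t, θ)‖ ^ 2 :=
    calc ‖V.starProjection (∫ θ in a..b, ∂ₜ u (t, θ))‖ ^ 2
        ≤ (∫ θ in a..b, ‖∂ₜ u (t, θ)‖) ^ 2 := by
          gcongr
          exact (V.norm_starProjection_apply_le _).trans
            (intervalIntegral.norm_integral_le_integral_norm hab.le)
      _ ≤ (b - a) * ∫ θ in a..b, ‖∂ₜ u (t, θ)‖ ^ 2 :=
          sq_intervalIntegral_le_mul_intervalIntegral_sq hab.le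
            (intervalIntegrable_slice hd.norm a b t)
            (intervalIntegrable_slice (f := fun p ↦ ‖∂ₜ u p‖ ^ 2) (hd.norm.pow 2) a b t)
  have := (inv_mul_le_iff₀ (sub_pos.2 hab)).2 hproj
  rw [sliceEnergy_eq_add hu]
  linarith

lemma abs_sliceFlux_le [CompleteSpace F] [V.HasOrthogonalProjection] (hu : ContDiff ℝ 1 u)
    (hab : a < b) (ha : u (t, a) ∈ V) :
    |sliceFlux V u a b t| ≤ (b - a) * sliceEnergy u a b t := by
  have hslice {f : ℝ × ℝ → F} (hf : Continuous f) : Continuous fun θ ↦ f (t, θ) :=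
    hf.comp (Continuous.prodMk_right t)
  have hd := continuous_dirDeriv hu
  exact abs_intervalIntegral_inner_le hab.le (hslice (hd _)) (hslice (hd _))
    ((hslice hu.continuous).sub continuous_const) fun θ hθ ↦
      norm_sub_starProjection_intervalAverage_le V hab
        (hasDerivAt_slice_snd (hu.differentiable one_ne_zero) t) (hslice (hd _)) ha hθ

theorem FreeBoundaryHarmonicOn.mul_integral_angularSliceEnergy_le [CompleteSpace F]
    [V.HasOrthogonalProjection] {l : ℝ} (hl : 0 ≤ l) (hab : a < b) (hu : ContDiff ℝ 2 u)
    (h : FreeBoundaryHarmonicOn V u (Icc (-(2 * l)) (2 * l)) a b) :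
    l * ∫ t in (-l)..l, angularSliceEnergy u a b t ≤
      (b - a) * ∫ t in (-(2 * l))..(2 * l), sliceEnergy u a b t := by
  have hu1 : ContDiff ℝ 1 u := hu.of_le one_le_two
  rw [← intervalIntegral.integral_const_mul (b - a)]
  exact mul_intervalIntegral_le_of_le_deriv hl
    (fun t ht ↦ hasDerivAt_sliceFlux hu h hab.le ht)
    (continuous_angularSliceEnergy hu1) (angularSliceEnergy_nonneg hab.le)
    (continuous_const.mul (continuous_sliceEnergy hu1))
    (fun t _ ↦ angularSliceEnergy_le_sliceEnergy_sub V hu1 hab t)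
    fun t ht ↦ abs_sliceFlux_le hu1 hab (h.mem t ht a (by simp))

end FreeBoundary

section UniqueContinuation

variable {F : Type*} [NormedAddCommGroup F] [NormedSpace ℝ F] {u : ℝ × ℝ → F}

lemma harmonicAt_comp_equivRealProdCLM (hu : ContDiff ℝ 2 u) {O : Set (ℝ × ℝ)} (hO : IsOpen O)
    (hΔ : ∀ p ∈ O, ∂ₜ (∂ₜ u) p + ∂θ (∂θ u) p = 0) {z : ℂ}
    (hz : Complex.equivRealProdCLM z ∈ O) :
    InnerProductSpace.HarmonicAt (u ∘ Complex.equivRealProdCLM) z := by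
  let L : ℂ →L[ℝ] ℝ × ℝ := Complex.equivRealProdCLM
  have huL : ContDiff ℝ 2 (u ∘ L) := hu.comp L.contDiff
  have hsecond (e y : ℂ) :
      iteratedFDeriv ℝ 2 (u ∘ L) y ![e, e] = dirDeriv (L e) (dirDeriv (L e) u) (L y) := by
    rw [← dirDeriv_dirDeriv huL, dirDeriv_comp_clm (hu.differentiable two_ne_zero),
      dirDeriv_comp_clm ((contDiff_dirDeriv hu one_add_one_eq_two.le _).differentiable one_ne_zero),
      Function.comp_apply]
  refine ⟨huL.contDiffAt, ?_⟩
  filter_upwards [(hO.preimage L.continuous).mem_nhds hz] with y hy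
  change Laplacian.laplacian (u ∘ L) y = 0
  simp only [InnerProductSpace.laplacian_eq_iteratedFDeriv_complexPlane, hsecond]
  simpa [L] using hΔ _ hy

lemma eqOn_const_of_harmonic_of_eventuallyEq (hu : ContDiff ℝ 2 u) {O : Set (ℝ × ℝ)}
    (hO : IsOpen O) (hO' : IsPreconnected O) (hΔ : ∀ p ∈ O, ∂ₜ (∂ₜ u) p + ∂θ (∂θ u) p = 0)
    {p : ℝ × ℝ} (hp : p ∈ O) {c : F} (hc : u =ᶠ[𝓝 p] fun _ ↦ c) : EqOn u (fun _ ↦ c) O := by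
  let L := Complex.equivRealProdCLM
  intro q hq
  refine (SeparatingDual.eq_iff_forall_dual_eq (R := ℝ)).2 fun φ ↦ ?_
  have hanalytic : AnalyticOnNhd ℝ (φ ∘ u ∘ L) (L ⁻¹' O) := fun z hz ↦
    HarmonicAt.analyticAt ((harmonicAt_comp_equivRealProdCLM hu hO hΔ hz).comp_CLM φ)
  have hpreconn : IsPreconnected (L ⁻¹' O) := L.toHomeomorph.isPreconnected_preimage.2 hO'
  have hlocal : φ ∘ u ∘ L =ᶠ[𝓝 (L.symm p)] fun _ ↦ φ c := by
    have : Tendsto L (𝓝 (L.symm p)) (𝓝 p) := by simpa using L.continuous.tendsto (L.symm p)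
    filter_upwards [this.eventually hc] with z hz using congrArg φ hz
  simpa using hanalytic.eqOn_of_preconnected_of_eventuallyEq analyticOnNhd_const hpreconn
    (by simpa using hp) hlocal (show L.symm q ∈ L ⁻¹' O by simpa using hq)

lemma sliceEnergy_pos (hu : ContDiff ℝ 1 u) {a b t θ : ℝ} (hab : a < b) (hθ : θ ∈ Icc a b)
    (h : fderiv ℝ u (t, θ) ≠ 0) : 0 < sliceEnergy u a b t := by
  refine intervalIntegral.integral_pos hab
    ((continuous_energyDensity hu).comp (Continuous.prodMk_right t)).continuousOn
    (fun _ _ ↦ by positivity) ⟨θ, hθ, ?_⟩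
  contrapose! h
  have hpart : ∂ₜ u (t, θ) = 0 ∧ ∂θ u (t, θ) = 0 := by
    constructor <;> rw [← norm_eq_zero, ← sq_eq_zero_iff] <;>
      nlinarith [sq_nonneg ‖∂ₜ u (t, θ)‖, sq_nonneg ‖∂θ u (t, θ)‖]
  ext
  exacts [hpart.1, hpart.2]

lemma integral_sliceEnergy_pos (hu : ContDiff ℝ 1 u) {a b c d : ℝ} (hab : a < b) (hcd : c < d)
    {p : ℝ × ℝ} (hp : p ∈ Icc c d ×ˢ Icc a b) (h : fderiv ℝ u p ≠ 0) :
    0 < ∫ t in c..d, sliceEnergy u a b t :=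
  intervalIntegral.integral_pos hcd (continuous_sliceEnergy hu).continuousOn
    (fun _ _ ↦ sliceEnergy_nonneg hab.le _) ⟨p.1, hp.1, sliceEnergy_pos hu hab hp.2 h⟩

lemma integral_sliceEnergy_pos_of_harmonic (hu : ContDiff ℝ 2 u) {a b c d c' d' : ℝ} (hab : a < b)
    (hcd : c < d) (hc : c' ≤ c) (hd : d ≤ d')
    (hΔ : ∀ p ∈ Icc c' d' ×ˢ Icc a b, ∂ₜ (∂ₜ u) p + ∂θ (∂θ u) p = 0)
    (hne : ¬ ∀ p ∈ Icc c' d' ×ˢ Icc a b, ∀ q ∈ Icc c' d' ×ˢ Icc a b, u p = u q) :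
    0 < ∫ t in c..d, sliceEnergy u a b t := by
  have hu1 : ContDiff ℝ 1 u := hu.of_le one_le_two
  by_contra hpos
  have hfderiv : EqOn (fderiv ℝ u) 0 (Ioo c d ×ˢ Ioo a b) := fun p hp ↦ by
    by_contra h
    exact hpos (integral_sliceEnergy_pos hu1 hab hcd
      (prod_mono Ioo_subset_Icc_self Ioo_subset_Icc_self hp) h)
  have hopen (x y : ℝ) : IsOpen (Ioo x y ×ˢ Ioo a b) := isOpen_Ioo.prod isOpen_Ioo
  have hconn (x y : ℝ) : IsPreconnected (Ioo x y ×ˢ Ioo a b) :=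
    isPreconnected_Ioo.prod isPreconnected_Ioo
  obtain ⟨k, hk⟩ := (hopen c d).exists_is_const_of_fderiv_eq_zero (hconn c d)
    (hu1.differentiable one_ne_zero).differentiableOn hfderiv
  obtain ⟨p, hp⟩ : (Ioo c d ×ˢ Ioo a b).Nonempty := (nonempty_Ioo.2 hcd).prod (nonempty_Ioo.2 hab)
  have hinterior : EqOn u (fun _ ↦ k) (Ioo c' d' ×ˢ Ioo a b) :=
    eqOn_const_of_harmonic_of_eventuallyEq hu (hopen c' d') (hconn c' d')
      (fun q hq ↦ hΔ q (prod_mono Ioo_subset_Icc_self Ioo_subset_Icc_self hq))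
      ⟨Ioo_subset_Ioo hc hd hp.1, hp.2⟩ (eventually_of_mem ((hopen c d).mem_nhds hp) hk)
  have hclosure := hinterior.closure hu.continuous continuous_const
  rw [closure_prod_eq, closure_Ioo hab.ne, closure_Ioo (hc.trans_lt (hcd.trans_le hd)).ne]
    at hclosure
  exact hne fun p hp q hq ↦ (hclosure hp).trans (hclosure hq).symm

end UniqueContinuation

section Extension

variable {E F : Type*} [NormedAddCommGroup E] [NormedSpace ℝ E] [FiniteDimensional ℝ E]
  [NormedAddCommGroup F] [NormedSpace ℝ F]

lemma exists_contDiff_eqOn_of_contDiffOn {n : ℕ∞} {u : E → F} {U K : Set E} (hU : IsOpen U)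
    (hK : IsClosed K) (hKU : K ⊆ U) (hu : ContDiffOn ℝ n u U) :
    ∃ v : E → F, ContDiff ℝ n v ∧ ∃ W, IsOpen W ∧ K ⊆ W ∧ EqOn u v W := by
  obtain ⟨χ, hχ0, hχ1, -⟩ := exists_contMDiffMap_zero_one_nhds_of_isClosed
    (modelWithCornersSelf ℝ E) (n := n) hU.isClosed_compl hK
    (disjoint_compl_left_iff_subset.2 hKU)
  have hχ : ContDiff ℝ n χ := χ.contMDiff.contDiff
  obtain ⟨W, hW, hKW, hχW⟩ := mem_nhdsSet_iff_exists.1 hχ1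
  refine ⟨fun p ↦ χ p • u p, contDiff_iff_contDiffAt.2 fun p ↦ ?_, W, hW, hKW, fun p hp ↦ ?_⟩
  · by_cases hp : p ∈ U
    · exact hχ.contDiffAt.smul (hu.contDiffAt (hU.mem_nhds hp))
    · have hzero : ∀ᶠ q in 𝓝 p, χ q = 0 := hχ0.filter_mono (nhds_le_nhdsSet hp)
      refine (contDiffAt_const (c := (0 : F))).congr_of_eventuallyEq ?_
      filter_upwards [hzero] with q hq
      rw [hq, zero_smul]
  · have hone : χ p = 1 := hχW hp
    simp only [hone, one_smul]

end Extension

section ThetaEnergy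

variable {F : Type*} [NormedAddCommGroup F] [InnerProductSpace ℝ F] [CompleteSpace F]
  {V : Submodule ℝ F} [V.HasOrthogonalProjection] {u : ℝ × ℝ → F} {a b r l δ : ℝ}

lemma FreeBoundaryHarmonicOn.integral_angularSliceEnergy_lt (hu : ContDiff ℝ 2 u)
    (h : FreeBoundaryHarmonicOn V u (Icc (-r) r) a b) (hab : a < b) (hl : 0 < l)
    (hlr : 2 * l ≤ r) (hδ : b - a < δ * l)
    (hne : ¬ ∀ p ∈ Icc (-r) r ×ˢ Icc a b, ∀ q ∈ Icc (-r) r ×ˢ Icc a b, u p = u q) :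
    ∫ t in (-l)..l, angularSliceEnergy u a b t <
      δ * ∫ t in (-(2 * l))..(2 * l), sliceEnergy u a b t := by
  have hlr' : -r ≤ -(2 * l) := neg_le_neg hlr
  have hpos : 0 < ∫ t in (-(2 * l))..(2 * l), sliceEnergy u a b t :=
    integral_sliceEnergy_pos_of_harmonic hu hab (by linarith) hlr' hlr h.laplacian_eq_zero hne
  refine lt_of_mul_lt_mul_left ?_ hl.le
  calc l * ∫ t in (-l)..l, angularSliceEnergy u a b t
      ≤ (b - a) * ∫ t in (-(2 * l))..(2 * l), sliceEnergy u a b t :=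
        (h.mono (Icc_subset_Icc hlr' hlr)).mul_integral_angularSliceEnergy_le hl.le hab hu
    _ < δ * l * ∫ t in (-(2 * l))..(2 * l), sliceEnergy u a b t := by gcongr
    _ = l * (δ * ∫ t in (-(2 * l))..(2 * l), sliceEnergy u a b t) := by ring

theorem stmt_11_general {U : Set (ℝ × ℝ)} (hU : IsOpen U) (hKU : Icc (-r) r ×ˢ Icc a b ⊆ U)
    (hu : ContDiffOn ℝ 2 u U) (h : FreeBoundaryHarmonicOn V u (Icc (-r) r) a b) (hab : a < b)
    (hl : 0 < l) (hlr : 2 * l ≤ r) (hδ : b - a < δ * l)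
    (hne : ¬ ∀ p ∈ Icc (-r) r ×ˢ Icc a b, ∀ q ∈ Icc (-r) r ×ˢ Icc a b, u p = u q) :
    ∫ t in (-l)..l, angularSliceEnergy u a b t <
      δ * ∫ t in (-(2 * l))..(2 * l), sliceEnergy u a b t := by
  obtain ⟨v, hv, W, hW, hKW, huv⟩ :=
    exists_contDiff_eqOn_of_contDiffOn (n := 2) hU (isClosed_Icc.prod isClosed_Icc) hKU hu
  have hsub {s : ℝ} (hs : 0 ≤ s) (hsr : s ≤ r) : uIcc (-s) s ⊆ Icc (-r) r := by
    rw [uIcc_of_le (neg_le_self hs)]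
    exact Icc_subset_Icc (neg_le_neg hsr) hsr
  rw [intervalIntegral.integral_congr
      ((eqOn_angularSliceEnergy hab.le hW hKW huv).mono (hsub hl.le (by linarith))),
    intervalIntegral.integral_congr
      ((eqOn_sliceEnergy hab.le hW hKW huv).mono (hsub (by linarith) hlr))]
  refine (h.congr hab.le hW hKW huv).integral_angularSliceEnergy_lt hv hab hl hlr hδ
    fun hconst ↦ hne fun p hp q hq ↦ ?_
  rw [huv (hKW hp), huv (hKW hq), hconst p hp q hq]

end ThetaEnergy

section CoordSubspace

variable {n k : ℕ}

/-- The coordinate subspace `ℝᵏ × {0} ⊆ ℝⁿ`, spanned by the first `k` coordinates; it is the whole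
space if `n ≤ k`. -/
def coordSubspace (n k : ℕ) : Submodule ℝ (EuclideanSpace ℝ (Fin n)) where
  carrier := {x | ∀ j : Fin n, k ≤ j → x j = 0}
  zero_mem' _ _ := rfl
  add_mem' hx hy j hj := by simp [hx j hj, hy j hj]
  smul_mem' c x hx j hj := by simp [hx j hj]

lemma mem_orthogonal_coordSubspace {w : EuclideanSpace ℝ (Fin n)}
    (hw : ∀ j : Fin n, (j : ℕ) < k → w j = 0) : w ∈ (coordSubspace n k)ᗮ := by
  refine (Submodule.mem_orthogonal' _ _).2 fun x hx ↦ ?_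
  rw [PiLp.inner_apply]
  refine Finset.sum_eq_zero fun j _ ↦ ?_
  rcases lt_or_ge (j : ℕ) k with hj | hj
  · rw [hw j hj, inner_zero_left]
  · rw [hx j hj, inner_zero_right]

lemma freeBoundaryHarmonicOn_coordSubspace {u : ℝ × ℝ → EuclideanSpace ℝ (Fin n)} {I : Set ℝ}
    {a b : ℝ} (hΔ : ∀ p ∈ I ×ˢ Icc a b, ∂ₜ (∂ₜ u) p + ∂θ (∂θ u) p = 0)
    (hedge : ∀ t ∈ I, ∀ θ ∈ ({a, b} : Set ℝ), ∀ j : Fin n,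
      (k ≤ (j : ℕ) → u (t, θ) j = 0) ∧ ((j : ℕ) < k → ∂θ u (t, θ) j = 0)) :
    FreeBoundaryHarmonicOn (coordSubspace n k) u I a b where
  laplacian_eq_zero := hΔ
  mem t ht θ hθ j := (hedge t ht θ hθ j).1
  dirDeriv_mem_orthogonal t ht θ hθ :=
    mem_orthogonal_coordSubspace fun j ↦ (hedge t ht θ hθ j).2

end CoordSubspace

/-- Euclidean case of the theta-energy estimate (Theorem 8.3, as invoked in Case 2 of the proof of
Lemma 8.4): for every `δ > 0` there is `l > 1`, depending only on `δ`, such that every nonconstant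
smooth harmonic map `u` on the closed half cylinder `[−3l, 3l] × [0, π]` with the Euclidean free
boundary conditions relative to `ℝᵏ ⊂ ℝⁿ` satisfies
`∫_{C_{−l,l}} |∂_θ u|² < δ ∫_{C_{−2l,2l}} |∇u|²`. -/
theorem stmt_11 (δ : ℝ) (hδ : 0 < δ) :
    ∃ l : ℝ, 1 < l ∧
      ∀ (n k : ℕ), k ≤ n →
      ∀ (u : ℝ × ℝ → EuclideanSpace ℝ (Fin n)) (U : Set (ℝ × ℝ)),
        IsOpen U →
        Set.Icc (-(3 * l)) (3 * l) ×ˢ Set.Icc 0 Real.pi ⊆ U →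
        ContDiffOn ℝ (⊤ : ℕ∞) u U →
        (∀ p ∈ Set.Icc (-(3 * l)) (3 * l) ×ˢ Set.Icc 0 Real.pi,
          fderiv ℝ (fun q => fderiv ℝ u q ((1 : ℝ), (0 : ℝ))) p ((1 : ℝ), (0 : ℝ))
            + fderiv ℝ (fun q => fderiv ℝ u q ((0 : ℝ), (1 : ℝ))) p ((0 : ℝ), (1 : ℝ)) = 0) →
        (∀ t ∈ Set.Icc (-(3 * l)) (3 * l), ∀ θ ∈ ({0, Real.pi} : Set ℝ), ∀ j : Fin n,
          (k ≤ (j : ℕ) → u (t, θ) j = 0) ∧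
          ((j : ℕ) < k → fderiv ℝ u (t, θ) ((0 : ℝ), (1 : ℝ)) j = 0)) →
        (¬ ∀ p ∈ Set.Icc (-(3 * l)) (3 * l) ×ˢ Set.Icc 0 Real.pi,
            ∀ q ∈ Set.Icc (-(3 * l)) (3 * l) ×ˢ Set.Icc 0 Real.pi, u p = u q) →
        (∫ t in (-l)..l, ∫ θ in (0 : ℝ)..Real.pi,
            ‖fderiv ℝ u (t, θ) ((0 : ℝ), (1 : ℝ))‖ ^ 2) <
          δ * ∫ t in (-(2 * l))..(2 * l), ∫ θ in (0 : ℝ)..Real.pi,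
            (‖fderiv ℝ u (t, θ) ((1 : ℝ), (0 : ℝ))‖ ^ 2
              + ‖fderiv ℝ u (t, θ) ((0 : ℝ), (1 : ℝ))‖ ^ 2) := by
  refine ⟨1 + 4 / δ, by simp [hδ], fun n k _ u U hU hKU hu hΔ hedge hne ↦ ?_⟩
  have hlδ : δ * (1 + 4 / δ) = δ + 4 := by field_simp
  exact stmt_11_general hU hKU (contDiffOn_infty.1 hu 2)
    (freeBoundaryHarmonicOn_coordSubspace hΔ hedge) Real.pi_pos (by positivity)
    (by gcongr; norm_num) (by linarith [Real.pi_lt_four]) hne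
end
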